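/- arXiv:1609.08544 — 3 statements merged into one kernel-verified Lean document; each statement's English description precedes it below -/
import Mathlib

section
/- For every subset A ⊆ ℕ^m there exists a quasi-polynomial χ of degree at most m such that χ(r) equals the cardinality of V_A^{(w)}(r) for all sufficiently large r ∈ ℕ. -/
/-- The weighted order of a point `a ∈ ℕ^m`: `ord_w a = w₁a₁ + ⋯ + w_m a_m`. -/
def ordw {m : ℕ} (w : Fin m → ℕ) (a : Fin m → ℕ) : ℕ := ∑ i, w i * a i

/-- `V_A`: the set of `v ∈ ℕ^m` that do not exceed (w.r.t. the product order)
any element of `A`. -/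
def VA {m : ℕ} (A : Set (Fin m → ℕ)) : Set (Fin m → ℕ) := {v | ∀ a ∈ A, ¬ a ≤ v}

/-- `V_A^{(w)}(r)`: elements of `V_A` of weighted order at most `r`. -/
def VAw {m : ℕ} (w : Fin m → ℕ) (A : Set (Fin m → ℕ)) (r : ℕ) : Set (Fin m → ℕ) :=
  {v ∈ VA A | ordw w v ≤ r}

open Polynomial in
theorem qp_bern_natDegree (n : ℕ) : (Polynomial.bernoulli n).natDegree ≤ n := by
  rw [Polynomial.natDegree_le_iff_coeff_eq_zero]
  intro N hN
  rw [Polynomial.coeff_bernoulli]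
  rw [if_neg (by omega)]

/-- Solving the difference equation with step one. -/
theorem qp_antidiff_one (d : ℕ) (p : Polynomial ℚ) (hp : p.natDegree ≤ d) :
    ∃ H : Polynomial ℚ, H.natDegree ≤ d + 1 ∧
      ∀ x : ℚ, H.eval (1 + x) = H.eval x + p.eval x := by
  refine ⟨∑ i ∈ Finset.range (d + 1),
    Polynomial.C (p.coeff i / ((i : ℚ) + 1)) * Polynomial.bernoulli (i + 1), ?_, ?_⟩
  · apply Polynomial.natDegree_sum_le_of_forall_le
    intro i hi
    have h1 := Polynomial.natDegree_C_mul_le (p.coeff i / ((i : ℚ) + 1))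
      (Polynomial.bernoulli (i + 1))
    have h2 := qp_bern_natDegree (i + 1)
    have := Finset.mem_range.1 hi
    omega
  · intro x
    rw [Polynomial.eval_finsetSum, Polynomial.eval_finsetSum,
      Polynomial.eval_eq_sum_range' (Nat.lt_succ_of_le hp), ← Finset.sum_add_distrib]
    apply Finset.sum_congr rfl
    intro i _
    have h : (i : ℚ) + 1 ≠ 0 := by positivity
    simp only [Polynomial.eval_mul, Polynomial.eval_C, Polynomial.bernoulli_eval_one_add]
    push_cast
    try rw [Nat.add_sub_cancel]
    field_simp

theorem qp_antidiff (d Q : ℕ) (hQ : 0 < Q) (p : Polynomial ℚ) (hp : p.natDegree ≤ d) :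
    ∃ H : Polynomial ℚ, H.natDegree ≤ d + 1 ∧
      ∀ x : ℚ, H.eval (x + Q) = H.eval x + p.eval x := by
  have hQ' : (Q : ℚ) ≠ 0 := by positivity
  obtain ⟨K, hK, hK2⟩ := qp_antidiff_one d (p.comp (Polynomial.C (Q : ℚ) * Polynomial.X)) (by
    rw [Polynomial.natDegree_comp, Polynomial.natDegree_C_mul_X _ hQ']; omega)
  refine ⟨K.comp (Polynomial.C (Q : ℚ)⁻¹ * Polynomial.X), ?_, ?_⟩
  · rw [Polynomial.natDegree_comp, Polynomial.natDegree_C_mul_X _ (inv_ne_zero hQ')]; omega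
  · intro x
    have := hK2 ((Q : ℚ)⁻¹ * x)
    simp only [Polynomial.eval_comp, Polynomial.eval_mul, Polynomial.eval_C,
      Polynomial.eval_X] at this ⊢
    rw [mul_inv_cancel_left₀ hQ'] at this
    rw [← this]
    congr 1
    field_simp
    ring

/-- `f` is eventually a quasi-polynomial of degree at most `d`. -/
def EQP (d : ℕ) (f : ℕ → ℚ) : Prop :=
  ∃ q : ℕ, 0 < q ∧ ∃ g : ℕ → Polynomial ℚ, (∀ i, (g i).natDegree ≤ d) ∧
    ∃ N : ℕ, ∀ r, N ≤ r → f r = (g (r % q)).eval (r : ℚ)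

theorem EQP.mono {d e : ℕ} (h : d ≤ e) {f : ℕ → ℚ} (hf : EQP d f) : EQP e f := by
  obtain ⟨q, hq, g, hg, N, hN⟩ := hf
  exact ⟨q, hq, g, fun i => (hg i).trans h, N, hN⟩

theorem EQP.congr {d : ℕ} {f f' : ℕ → ℚ} (hf : EQP d f) (M : ℕ)
    (h : ∀ r, M ≤ r → f' r = f r) : EQP d f' := by
  obtain ⟨q, hq, g, hg, N, hN⟩ := hf
  exact ⟨q, hq, g, hg, max M N, fun r hr => by
    rw [h r (le_trans (le_max_left _ _) hr), hN r (le_trans (le_max_right _ _) hr)]⟩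

theorem EQP.const (d : ℕ) (c : ℚ) : EQP d (fun _ => c) :=
  ⟨1, one_pos, fun _ => Polynomial.C c, fun i => by simp, 0, fun r _ => by simp⟩

theorem EQP.add {d : ℕ} {f f' : ℕ → ℚ} (hf : EQP d f) (hf' : EQP d f') :
    EQP d (fun r => f r + f' r) := by
  obtain ⟨q, hq, g, hg, N, hN⟩ := hf
  obtain ⟨q', hq', g', hg', N', hN'⟩ := hf'
  refine ⟨q * q', Nat.mul_pos hq hq', fun i => g (i % q) + g' (i % q'), fun i => ?_,
    max N N', fun r hr => ?_⟩
  · exact Polynomial.natDegree_add_le_of_degree_le (hg _) (hg' _)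
  · simp only
    rw [hN r (le_trans (le_max_left _ _) hr), hN' r (le_trans (le_max_right _ _) hr),
      Nat.mod_mul_right_mod, Nat.mod_mul_left_mod, Polynomial.eval_add]

theorem EQP.shift {d : ℕ} {f : ℕ → ℚ} (hf : EQP d f) (c : ℕ) :
    EQP d (fun r => f (r + c)) := by
  obtain ⟨q, hq, g, hg, N, hN⟩ := hf
  refine ⟨q, hq, fun i => (g ((i + c) % q)).comp (Polynomial.X + Polynomial.C (c : ℚ)),
    fun i => ?_, N, fun r hr => ?_⟩
  · rw [Polynomial.natDegree_comp, Polynomial.natDegree_X_add_C, mul_one]; exact hg _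
  · simp only
    rw [hN (r + c) (by omega), Nat.mod_add_mod]
    simp

theorem EQP.unshift {d : ℕ} {f : ℕ → ℚ} (c : ℕ) (hf : EQP d (fun r => f (r + c))) :
    EQP d f := by
  obtain ⟨q, hq, g, hg, N, hN⟩ := hf
  refine ⟨q, hq, fun i => (g ((i + (q - 1) * c) % q)).comp (Polynomial.X - Polynomial.C (c : ℚ)),
    fun i => ?_, N + c, fun r hr => ?_⟩
  · rw [Polynomial.natDegree_comp, Polynomial.natDegree_X_sub_C, mul_one]; exact hg _
  · obtain ⟨s, rfl⟩ : ∃ s, r = s + c := ⟨r - c, by omega⟩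
    simp only
    have hNs := hN s (by omega)
    simp only at hNs
    rw [hNs, Nat.mod_add_mod]
    have : s + c + (q - 1) * c = s + q * c := by
      obtain ⟨k, rfl⟩ : ∃ k, q = k + 1 := ⟨q - 1, by omega⟩
      simp only [Nat.add_sub_cancel]; ring
    rw [this, Nat.add_mul_mod_self_left]
    simp

theorem EQP.sum {d : ℕ} {f : ℕ → ℕ → ℚ} (n : ℕ) (hf : ∀ j, EQP d (f j)) :
    EQP d (fun r => ∑ j ∈ Finset.range n, f j r) := by
  induction n with
  | zero => simpa using EQP.const d 0
  | succ n ih =>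
    simp only [Finset.sum_range_succ]
    exact ih.add (hf n)

/-- Step equal to the period. -/
theorem EQP.antidiff_aux {d Q : ℕ} (hQ : 0 < Q) {F : ℕ → ℚ} (g : ℕ → Polynomial ℚ)
    (hg : ∀ i, (g i).natDegree ≤ d) (N : ℕ)
    (hN : ∀ r, N ≤ r → F (r + Q) = F r + (g (r % Q)).eval (r : ℚ)) : EQP (d + 1) F := by
  choose H hH hH2 using fun i => qp_antidiff d Q hQ (g i) (hg i)
  let b : ℕ → ℕ := fun i => i + Q * N
  refine ⟨Q, hQ, fun i => H i + Polynomial.C (F (b i) - (H i).eval (b i : ℚ)), fun i => ?_,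
    Q * N + Q, fun r hr => ?_⟩
  · exact Polynomial.natDegree_add_le_of_degree_le (hH i) (by simp)
  · have hQN : N ≤ Q * N := Nat.le_mul_of_pos_left _ hQ
    have key : ∀ i, i < Q → ∀ k : ℕ, F (b i + Q * k) =
        (H i).eval ((b i + Q * k : ℕ) : ℚ) + (F (b i) - (H i).eval (b i : ℚ)) := by
      intro i hi k
      induction k with
      | zero => simp
      | succ k ih =>
        have e : b i + Q * (k + 1) = b i + Q * k + Q := by ring
        have hmod : (b i + Q * k) % Q = i := by
          simp only [b]
          rw [Nat.add_mul_mod_self_left, Nat.add_mul_mod_self_left, Nat.mod_eq_of_lt hi]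
        rw [e, hN _ (by simp only [b]; omega), hmod, ih, Nat.cast_add _ Q, hH2]
        ring
    have hlt := Nat.mod_lt r hQ
    have hdiv : N ≤ r / Q := by
      rw [Nat.le_div_iff_mul_le hQ]; rw [mul_comm]; omega
    have hr' : r = b (r % Q) + Q * (r / Q - N) := by
      have h1 := Nat.mod_add_div r Q
      have h2 : Q * (r / Q) = Q * N + Q * (r / Q - N) := by
        rw [← Nat.mul_add]; congr 1; omega
      simp only [b]; omega
    have := key (r % Q) hlt (r / Q - N)
    rw [← hr'] at this
    rw [this]
    simp

theorem EQP.antidiff {d w : ℕ} (hw : 0 < w) {F f : ℕ → ℚ} (hf : EQP d f)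
    (h : ∀ r, F (r + w) = F r + f r) : EQP (d + 1) F := by
  obtain ⟨q, hq, g, hg, N, hN⟩ := hf
  have hs : ∀ n r, F (r + w * n) = F r + ∑ j ∈ Finset.range n, f (r + w * j) := by
    intro n r
    induction n with
    | zero => simp
    | succ n ih =>
      rw [show r + w * (n + 1) = r + w * n + w by ring, h, ih, Finset.sum_range_succ]; ring
  refine EQP.antidiff_aux (Q := w * q) (Nat.mul_pos hw hq)
    (fun i => ∑ j ∈ Finset.range q, (g ((i + w * j) % q)).comp
      (Polynomial.X + Polynomial.C ((w * j : ℕ) : ℚ))) (fun i => ?_) N (fun r hr => ?_)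
  · apply Polynomial.natDegree_sum_le_of_forall_le
    intro j _
    rw [Polynomial.natDegree_comp, Polynomial.natDegree_X_add_C, mul_one]; exact hg _
  · rw [hs, Polynomial.eval_finsetSum]
    congr 1
    apply Finset.sum_congr rfl
    intro j _
    rw [hN _ (by omega), Nat.add_mod (r % (w * q)), Nat.mod_mul_left_mod, ← Nat.add_mod]
    simp

theorem qp_wf (m : ℕ) : WellFounded ((· < ·) : LowerSet (Fin m → ℕ) → LowerSet (Fin m → ℕ) → Prop) := by
  rw [RelEmbedding.wellFounded_iff_isEmpty]
  refine ⟨fun f => ?_⟩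
  have hlt : ∀ {i j : ℕ}, i < j → f j < f i := fun {i j} h => f.map_rel_iff.2 h
  have hx : ∀ n, ∃ x, x ∈ f n ∧ x ∉ f (n + 1) := fun n => by
    have := hlt (Nat.lt_succ_self n)
    exact Set.exists_of_ssubset (LowerSet.coe_ssubset_coe.2 this)
  choose x hx1 hx2 using hx
  obtain ⟨i, j, hij, hle⟩ := wellQuasiOrdered_le x
  have h1 : f j ≤ f (i + 1) := by
    rcases (Nat.succ_le_of_lt hij).eq_or_lt with h | h
    · rw [← h]
    · exact (hlt h).le
  exact hx2 i ((f (i + 1)).lower hle (h1 (hx1 j)))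

theorem qp_finite {m : ℕ} (w : Fin m → ℕ) (hw : ∀ i, 0 < w i) (L : Set (Fin m → ℕ)) (r : ℕ) :
    {v ∈ L | ordw w v ≤ r}.Finite := by
  apply (Set.finite_Iic (fun _ : Fin m => r)).subset
  rintro v ⟨_, hv⟩ i
  have h1 : w i * v i ≤ ordw w v :=
    Finset.single_le_sum (f := fun i => w i * v i) (fun _ _ => Nat.zero_le _) (Finset.mem_univ i)
  have h2 : v i ≤ w i * v i := Nat.le_mul_of_pos_left _ (hw i)
  exact h2.trans (h1.trans hv)

/-- The slice of a lower set at first coordinate zero. -/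
def qpSlice {m : ℕ} (L : LowerSet (Fin (m + 1) → ℕ)) : LowerSet (Fin m → ℕ) where
  carrier := {v | Fin.cons 0 v ∈ L}
  lower' := fun a b hab ha => L.lower (Fin.cons_le_cons.2 ⟨le_rfl, hab⟩) ha

/-- Translation of a lower set in the first coordinate. -/
def qpTail {m : ℕ} (L : LowerSet (Fin (m + 1) → ℕ)) : LowerSet (Fin (m + 1) → ℕ) where
  carrier := {v | v + Pi.single 0 1 ∈ L}
  lower' := fun a b hab ha => L.lower (by gcongr) ha

theorem qpTail_le {m : ℕ} (L : LowerSet (Fin (m + 1) → ℕ)) : qpTail L ≤ L := by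
  intro v hv
  exact L.lower (show v ≤ v + Pi.single 0 1 from le_self_add) hv

theorem qp_count {m : ℕ} (w : Fin (m + 1) → ℕ) (hw : ∀ i, 0 < w i)
    (L : LowerSet (Fin (m + 1) → ℕ)) (r : ℕ) :
    {v ∈ (L : Set _) | ordw w v ≤ r + w 0}.ncard =
      {v ∈ (qpTail L : Set _) | ordw w v ≤ r}.ncard +
      {v ∈ (qpSlice L : Set _) | ordw (fun i => w i.succ) v ≤ r + w 0}.ncard := by
  have e : {v ∈ (L : Set _) | ordw w v ≤ r + w 0} =
      (fun v => v + Pi.single 0 1) '' {v ∈ (qpTail L : Set _) | ordw w v ≤ r} ∪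
      (fun v => (Fin.cons 0 v : Fin (m + 1) → ℕ)) ''
        {v ∈ (qpSlice L : Set _) | ordw (fun i => w i.succ) v ≤ r + w 0} := by
    have ho : ∀ v : Fin (m + 1) → ℕ, ordw w (v + Pi.single 0 1) = ordw w v + w 0 := by
      intro v
      simp [ordw, mul_add, Finset.sum_add_distrib, Pi.single_apply]
    have ho2 : ∀ v : Fin m → ℕ, ordw w (Fin.cons 0 v) = ordw (fun i => w i.succ) v := by
      intro v
      simp [ordw, Fin.sum_univ_succ]
    ext v
    constructor
    · rintro ⟨hv, hvr⟩
      by_cases h0 : v 0 = 0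
      · right
        have hc : (Fin.cons 0 (Fin.tail v) : Fin (m + 1) → ℕ) = v := by
          rw [← h0]; exact Fin.cons_self_tail v
        refine ⟨Fin.tail v, ⟨?_, ?_⟩, hc⟩
        · show Fin.cons 0 (Fin.tail v) ∈ L
          rw [hc]; exact hv
        · rw [← ho2, hc]; exact hvr
      · left
        have hc : (v - Pi.single 0 1) + Pi.single 0 1 = v := by
          apply tsub_add_cancel_of_le
          intro i
          by_cases hi : i = 0
          · subst hi; simp; omega
          · simp [hi]
        refine ⟨v - Pi.single 0 1, ⟨?_, ?_⟩, hc⟩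
        · show (v - Pi.single 0 1) + Pi.single 0 1 ∈ L
          rw [hc]; exact hv
        · have := ho (v - Pi.single 0 1)
          rw [hc] at this
          omega
    · rintro (⟨u, ⟨hu, hur⟩, rfl⟩ | ⟨u, ⟨hu, hur⟩, rfl⟩)
      · exact ⟨hu, by simp only [ho]; omega⟩
      · exact ⟨hu, by simp only [ho2]; exact hur⟩
  rw [e, Set.ncard_union_eq ?_ ((qp_finite w hw _ r).image _)
    ((qp_finite _ (fun i => hw i.succ) _ _).image _),
    Set.ncard_image_of_injective, Set.ncard_image_of_injective]
  · intro a b hab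
    exact (Fin.cons_inj.1 hab).2
  · exact add_left_injective _
  · rw [Set.disjoint_left]
    rintro _ ⟨u, _, rfl⟩ ⟨u', _, h⟩
    have := congrFun h 0
    simp at this

theorem qp_main (m : ℕ) : ∀ (w : Fin m → ℕ), (∀ i, 0 < w i) → ∀ (L : LowerSet (Fin m → ℕ)),
    EQP m (fun r => ({v ∈ (L : Set _) | ordw w v ≤ r}.ncard : ℚ)) := by
  induction m with
  | zero =>
    intro w _ L
    have : ∀ r, {v ∈ (L : Set _) | ordw w v ≤ r} = (L : Set _) := by
      intro r; ext v; simp [ordw]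
    simp only [this]
    exact EQP.const _ _
  | succ m ih =>
    intro w hw L
    induction L using (qp_wf (m + 1)).induction with
    | _ L ihL =>
    have hs := (ih (fun i => w i.succ) (fun i => hw i.succ) (qpSlice L)).shift (w 0)
    have hc := fun r => congrArg (fun n : ℕ => (n : ℚ)) (qp_count w hw L r)
    simp only [Nat.cast_add] at hc
    rcases (qpTail_le L).eq_or_lt with h | h
    · rw [h] at hc
      exact EQP.antidiff (hw 0) hs hc
    · apply EQP.unshift (w 0)
      exact ((ihL _ h).add (hs.mono (Nat.le_succ m))).congr 0 (fun r _ => hc r)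

/-- For every subset `A ⊆ ℕ^m` there exists a quasi-polynomial `χ` of degree at most `m`
such that `χ(r) = Card V_A^{(w)}(r)` for all sufficiently large `r`. -/
theorem exists_dimension_quasipolynomial
    (m : ℕ) (hm : 0 < m) (w : Fin m → ℕ) (hw : ∀ i, 0 < w i)
    (A : Set (Fin m → ℕ)) :
    ∃ (q : ℕ) (hq : 0 < q) (g : Fin q → Polynomial ℚ),
      (∀ i : Fin q, (g i).natDegree ≤ m) ∧
      ∃ N : ℕ, ∀ r : ℕ, N ≤ r →
        (Set.ncard (VAw w A r) : ℚ) = (g ⟨r % q, Nat.mod_lt r hq⟩).eval (r : ℚ) := by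
  obtain ⟨q, hq, g, hg, N, hN⟩ := qp_main m w hw
    ⟨VA A, fun a b hab ha c hc hcb => ha c hc (hcb.trans hab)⟩
  exact ⟨q, hq, fun i => g i, fun i => hg i, N, hN⟩
end

section
/- Let P ⊆ ℝ^d be a rational polytope of dimension d. Then the lattice-point counting function L(P, r) = Card(rP ∩ ℤ^d) is a quasi-polynomial of r of degree d, and the coefficient of r^d in each of its constituent polynomials equals the Euclidean volume of P. -/
open scoped Pointwise

namespace EhrhartAux

open Finset Filter Topology

/-- Nonempty compact sets in `ℝ^n` have a lexicographic maximum. -/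
lemma exists_lexMax : ∀ (n : ℕ) (K : Set (Fin n → ℝ)), IsCompact K → K.Nonempty →
    ∃ x ∈ K, ∀ y ∈ K, toLex y ≤ toLex x := by
  intro n
  induction n with
  | zero =>
    intro K _ hne
    obtain ⟨x, hx⟩ := hne
    exact ⟨x, hx, fun y _ => le_of_eq (congrArg toLex (Subsingleton.elim y x))⟩
  | succ n ih =>
    intro K hK hne
    obtain ⟨a, ha, hmax⟩ := hK.exists_isMaxOn hne (f := fun x => x 0)
      (continuous_apply 0).continuousOn
    let T : (Fin (n + 1) → ℝ) → (Fin n → ℝ) := fun x i => x i.succ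
    have hT : Continuous T := by fun_prop
    have hK' : IsCompact (K ∩ {x | x 0 = a 0}) :=
      hK.inter_right (isClosed_eq (continuous_apply 0) continuous_const)
    obtain ⟨t, ⟨x, ⟨hxK, hx0⟩, rfl⟩, ht⟩ := ih (T '' (K ∩ {x | x 0 = a 0})) (hK'.image hT)
      ⟨_, a, ⟨ha, rfl⟩, rfl⟩
    refine ⟨x, hxK, fun y hy => ?_⟩
    have hya : y 0 ≤ a 0 := hmax hy
    have hx0' : x 0 = a 0 := hx0
    rcases hya.lt_or_eq with h | h
    · refine le_of_lt ⟨0, fun j hj => absurd hj (Fin.not_lt_zero j), ?_⟩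
      change y 0 < x 0
      rw [hx0']; exact h
    · have h1 := ht (T y) ⟨y, ⟨hy, h⟩, rfl⟩
      rcases h1.lt_or_eq with h2 | h2
      · obtain ⟨i, hi1, hi2⟩ := h2
        refine le_of_lt ⟨i.succ, fun j hj => ?_, hi2⟩
        induction j using Fin.cases with
        | zero => exact h.trans hx0'.symm
        | succ j => exact hi1 j (Fin.succ_lt_succ_iff.mp hj)
      · refine le_of_eq (congrArg toLex ?_)
        funext j
        induction j using Fin.cases with
        | zero => exact h.trans hx0'.symm
        | succ j => exact congrFun (toLex.injective h2) j

/-- Lexicographically optimal coefficient vectors. -/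
def Opt {m d : ℕ} (v : Fin (m + 1) → Fin d → ℝ) (l : Fin (m + 1) → ℝ) : Prop :=
  (∀ i, 0 ≤ l i) ∧ ∀ ν : Fin (m + 1) → ℝ, (∀ i, 0 ≤ ν i) → ∑ i, ν i = ∑ i, l i →
    ∑ i, ν i • v i = ∑ i, l i • v i → toLex ν ≤ toLex l

lemma opt_exists {m d : ℕ} (v : Fin (m + 1) → Fin d → ℝ) (μ : Fin (m + 1) → ℝ)
    (hμ : ∀ i, 0 ≤ μ i) : ∃ l, Opt v l ∧ ∑ i, l i = ∑ i, μ i ∧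
      ∑ i, l i • v i = ∑ i, μ i • v i := by
  let K : Set (Fin (m + 1) → ℝ) := {l | (∀ i, 0 ≤ l i) ∧ ∑ i, l i = ∑ i, μ i ∧
      ∑ i, l i • v i = ∑ i, μ i • v i}
  have hK : IsCompact K := by
    refine IsCompact.of_isClosed_subset
      (isCompact_Icc (a := (0 : Fin (m + 1) → ℝ)) (b := fun _ => ∑ i, μ i)) ?_ ?_
    · have h1 : IsClosed {l : Fin (m + 1) → ℝ | ∀ i, 0 ≤ l i} := by
        simp only [Set.ofPred_forall]
        exact isClosed_iInter fun i => isClosed_le continuous_const (continuous_apply i)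
      refine h1.inter (IsClosed.inter ?_ ?_)
      · exact isClosed_eq (by fun_prop) continuous_const
      · exact isClosed_eq (by fun_prop) continuous_const
    · rintro l ⟨h1, h2, -⟩
      refine ⟨h1, fun i => ?_⟩
      change l i ≤ ∑ i, μ i
      rw [← h2]
      exact Finset.single_le_sum (fun j _ => h1 j) (Finset.mem_univ i)
  obtain ⟨l, ⟨h1, h2, h3⟩, hl⟩ := exists_lexMax _ K hK ⟨μ, hμ, rfl, rfl⟩
  exact ⟨l, ⟨h1, fun ν a b c => hl ν ⟨a, b.trans h2, c.trans h3⟩⟩, h2, h3⟩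

lemma opt_unique {m d : ℕ} {v : Fin (m + 1) → Fin d → ℝ} {l μ : Fin (m + 1) → ℝ}
    (hl : Opt v l) (hμ : Opt v μ) (h1 : ∑ i, l i = ∑ i, μ i)
    (h2 : ∑ i, l i • v i = ∑ i, μ i • v i) : l = μ :=
  toLex.injective (le_antisymm (hμ.2 l hl.1 h1 h2) (hl.2 μ hμ.1 h1.symm h2.symm))

/-- Optimality depends only on the support away from the pulled vertex `0`. -/
lemma opt_transfer {m d : ℕ} {v : Fin (m + 1) → Fin d → ℝ} {l μ : Fin (m + 1) → ℝ}
    (hl : Opt v l) (hμ : ∀ i, 0 ≤ μ i) (hs : ∀ i, i ≠ 0 → 0 < μ i → 0 < l i) : Opt v μ := by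
  refine ⟨hμ, fun ν hν h1 h2 => ?_⟩
  by_contra hlt
  rw [not_le] at hlt
  obtain ⟨k, hk1, hk2⟩ := hlt
  have hk1' : ∀ j < k, μ j = ν j := hk1
  have hk2' : μ k < ν k := hk2
  have h0 : μ 0 ≤ ν 0 := by
    rcases (Fin.zero_le k).lt_or_eq with h | h
    · exact (hk1' 0 h).le
    · rw [h]; exact hk2'.le
  have hε : ∀ᶠ ε : ℝ in 𝓝[>] 0, ∀ i, 0 ≤ l i + ε * (ν i - μ i) := by
    rw [eventually_all]
    intro i
    by_cases hi : 0 ≤ ν i - μ i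
    · filter_upwards [self_mem_nhdsWithin] with ε hε
      exact add_nonneg (hl.1 i) (mul_nonneg (le_of_lt hε) hi)
    · have hi0 : i ≠ 0 := by
        rintro rfl
        exact hi (sub_nonneg.mpr h0)
      have hli : 0 < l i := hs i hi0 (by have := hν i; linarith [not_le.mp hi])
      have hc : Tendsto (fun ε : ℝ => l i + ε * (ν i - μ i)) (𝓝[>] 0) (𝓝 (l i + 0 * (ν i - μ i))) :=
        ((by fun_prop : Continuous (fun ε : ℝ => l i + ε * (ν i - μ i))).tendsto 0).mono_left
          nhdsWithin_le_nhds
      rw [zero_mul, add_zero] at hc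
      exact (hc.eventually (lt_mem_nhds hli)).mono fun _ h => le_of_lt h
  obtain ⟨ε, hε1, hε0⟩ := (hε.and self_mem_nhdsWithin).exists
  have hε0' : 0 < ε := hε0
  have := hl.2 (fun i => l i + ε * (ν i - μ i)) hε1
    (by rw [sum_add_distrib, ← mul_sum, sum_sub_distrib, h1, sub_self, mul_zero, add_zero])
    (by
      simp only [add_smul, mul_smul, sub_smul]
      rw [sum_add_distrib, ← smul_sum, sum_sub_distrib, h2, sub_self, smul_zero, add_zero])
  refine absurd this (not_le.mpr ⟨k, fun j hj => ?_, ?_⟩)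
  · change l j = l j + ε * (ν j - μ j)
    rw [hk1' j hj]; ring
  · change l k < l k + ε * (ν k - μ k)
    have := mul_pos hε0' (sub_pos.mpr hk2')
    linarith

/-- Lattice coefficient vectors of type `W` at height `r`, low in the directions `S`. -/
def X {m d : ℕ} (v : Fin (m + 1) → Fin d → ℝ) (q : ℕ) (W S : Finset (Fin (m + 1))) (r : ℕ) :
    Set (Fin (m + 1) → ℝ) :=
  {l | Opt v l ∧ ∑ i, l i = r ∧ (∃ z : Fin d → ℤ, ∑ i, l i • v i = fun j => (z j : ℝ)) ∧
    (∀ i, i ∈ W ↔ (i = 0 ∨ 0 < l i)) ∧ ∀ i ∈ S, (l i ≤ q ∧ (i = 0 → l i < q))}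

lemma X_step {m d : ℕ} {v : Fin (m + 1) → Fin d → ℝ} {q : ℕ} (hq : 0 < q)
    (hv : ∀ i, ∃ z : Fin d → ℤ, (q : ℝ) • v i = fun j => (z j : ℝ))
    {W S : Finset (Fin (m + 1))} {i : Fin (m + 1)} (hiW : i ∈ W) (hiS : i ∉ S)
    (hfin : ∀ S r, (X v q W S r).Finite) (r : ℕ) :
    (X v q W S (r + q)).ncard = (X v q W (insert i S) (r + q)).ncard + (X v q W S r).ncard := by
  have hq' : (0 : ℝ) < q := by exact_mod_cast hq
  let e : Fin (m + 1) → ℝ := Pi.single i (q : ℝ)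
  have hei : e i = q := by simp [e]
  have hej : ∀ j, j ≠ i → e j = 0 := fun j hj => by simp [e, hj]
  have hes : ∑ j, e j = q := by simp [e]
  have hev : ∑ j, e j • v j = (q : ℝ) • v i := by
    rw [Finset.sum_eq_single i]
    · rw [hei]
    · intro j _ hj; rw [hej j hj, zero_smul]
    · simp
  obtain ⟨z0, hz0⟩ := hv i
  have hinj : Function.Injective (fun l : Fin (m + 1) → ℝ => l + e) := add_left_injective e
  have hunion : X v q W S (r + q) =
      X v q W (insert i S) (r + q) ∪ (fun l => l + e) '' X v q W S r := by
    ext l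
    constructor
    · rintro ⟨h1, h2, ⟨z, h3⟩, h4, h5⟩
      by_cases hlow : l i ≤ q ∧ (i = 0 → l i < q)
      · left
        refine ⟨h1, h2, ⟨z, h3⟩, h4, ?_⟩
        intro j hj
        rcases Finset.mem_insert.mp hj with rfl | hj
        · exact hlow
        · exact h5 j hj
      · right
        have hnn : (i = 0 ∧ (q : ℝ) ≤ l i) ∨ (q : ℝ) < l i := by
          by_contra hcon
          push Not at hcon
          exact hlow ⟨hcon.2, hcon.1⟩
        have hge : (q : ℝ) ≤ l i := by rcases hnn with h | h; exacts [h.2, h.le]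
        have hnonneg : ∀ j, 0 ≤ (l - e) j := by
          intro j
          by_cases hj : j = i
          · subst hj; simp only [Pi.sub_apply, hei]; linarith
          · simp only [Pi.sub_apply, hej j hj, sub_zero]; exact h1.1 j
        refine ⟨l - e, ⟨?_, ?_, ⟨fun j => z j - z0 j, ?_⟩, ?_, ?_⟩, sub_add_cancel l e⟩
        · refine opt_transfer h1 hnonneg fun j _ hj => ?_
          by_cases hji : j = i
          · subst hji; linarith
          · simpa only [Pi.sub_apply, hej j hji, sub_zero] using hj
        · simp only [Pi.sub_apply, sum_sub_distrib, hes, h2]; push_cast; ring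
        · simp only [Pi.sub_apply, sub_smul, sum_sub_distrib, hev, h3, hz0]
          funext j; simp
        · intro j
          by_cases hji : j = i
          · subst hji
            refine ⟨fun _ => ?_, fun _ => hiW⟩
            rcases hnn with h | h
            · exact Or.inl h.1
            · right; simp only [Pi.sub_apply, hei]; linarith
          · rw [h4 j]; simp only [Pi.sub_apply, hej j hji, sub_zero]
        · intro j hj
          have hji : j ≠ i := by rintro rfl; exact hiS hj
          simp only [Pi.sub_apply, hej j hji, sub_zero]
          exact h5 j hj
    · rintro (⟨h1, h2, h3, h4, h5⟩ | ⟨l, ⟨h1, h2, ⟨z, h3⟩, h4, h5⟩, rfl⟩)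
      · exact ⟨h1, h2, h3, h4, fun j hj => h5 j (Finset.mem_insert_of_mem hj)⟩
      · have hnonneg : ∀ j, 0 ≤ (l + e) j := by
          intro j
          by_cases hj : j = i
          · subst hj; simp only [Pi.add_apply, hei]; linarith [h1.1 j]
          · simp only [Pi.add_apply, hej j hj, add_zero]; exact h1.1 j
        refine ⟨?_, ?_, ⟨fun j => z j + z0 j, ?_⟩, ?_, ?_⟩
        · refine opt_transfer h1 hnonneg fun j hj0 hj => ?_
          by_cases hji : j = i
          · subst hji; exact ((h4 j).mp hiW).resolve_left hj0
          · simpa only [Pi.add_apply, hej j hji, add_zero] using hj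
        · simp only [Pi.add_apply, sum_add_distrib, hes, h2]; push_cast; ring
        · simp only [Pi.add_apply, add_smul, sum_add_distrib, hev, h3, hz0]
          funext j; simp
        · intro j
          by_cases hji : j = i
          · subst hji
            refine ⟨fun _ => ?_, fun _ => hiW⟩
            right; simp only [Pi.add_apply, hei]; linarith [h1.1 j]
          · rw [h4 j]; simp only [Pi.add_apply, hej j hji, add_zero]
        · intro j hj
          have hji : j ≠ i := by rintro rfl; exact hiS hj
          simp only [Pi.add_apply, hej j hji, add_zero]
          exact h5 j hj
  have hdisj : Disjoint (X v q W (insert i S) (r + q)) ((fun l => l + e) '' X v q W S r) := by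
    rw [Set.disjoint_left]
    rintro _ ⟨-, -, -, -, h5⟩ ⟨l, ⟨h1, -, -, h4, -⟩, rfl⟩
    have h := h5 i (Finset.mem_insert_self i S)
    simp only [Pi.add_apply, hei] at h
    rcases (h4 i).mp hiW with h0 | h0
    · linarith [h.2 h0, h1.1 i]
    · linarith [h.1]
  rw [hunion, Set.ncard_union_eq hdisj (hfin _ _) ((hfin _ _).image _),
    Set.ncard_image_of_injective _ hinj]

lemma X_top {m d : ℕ} {v : Fin (m + 1) → Fin d → ℝ} {q : ℕ}
    {W : Finset (Fin (m + 1))} {r : ℕ} (hr : W.card * q ≤ r) :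
    X v q W W r = ∅ := by
  rw [Set.eq_empty_iff_forall_notMem]
  rintro l ⟨h1, h2, -, h4, h5⟩
  have h0 : (0 : Fin (m + 1)) ∈ W := (h4 0).mpr (Or.inl rfl)
  have h6 : ∑ i, l i = ∑ i ∈ W, l i := by
    symm
    refine Finset.sum_subset (Finset.subset_univ W) fun i _ hi => ?_
    have := mt (h4 i).mpr hi
    push Not at this
    exact le_antisymm this.2 (h1.1 i)
  have h7 : ∑ i ∈ W, l i < ∑ i ∈ W, (q : ℝ) :=
    Finset.sum_lt_sum (fun i hi => (h5 i hi).1) ⟨0, h0, (h5 0 h0).2 rfl⟩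
  rw [← h6, h2, Finset.sum_const, nsmul_eq_mul] at h7
  have : r < W.card * q := by exact_mod_cast h7
  omega

lemma X_diff {m d : ℕ} {v : Fin (m + 1) → Fin d → ℝ} {q : ℕ} (hq : 0 < q)
    (hv : ∀ i, ∃ z : Fin d → ℤ, (q : ℝ) • v i = fun j => (z j : ℝ))
    {W : Finset (Fin (m + 1))}
    (hfin : ∀ S r, (X v q W S r).Finite) (a : ℕ) (S : Finset (Fin (m + 1))) (hS : S ⊆ W) :
    ∀ n : ℕ, (fwdDiff 1)^[S.card] (fun n : ℕ => ((X v q W ∅ (a + q * n)).ncard : ℚ)) n =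
      ((X v q W S (a + q * (n + S.card))).ncard : ℚ) := by
  induction S using Finset.induction_on with
  | empty => intro n; simp
  | insert i S hi ih =>
    intro n
    have ih' := ih ((Finset.subset_insert i S).trans hS)
    rw [Finset.card_insert_of_notMem hi, Function.iterate_succ_apply', fwdDiff, ih', ih']
    have := X_step hq hv (hS (Finset.mem_insert_self i S)) hi hfin (a + q * (n + S.card))
    have e1 : a + q * (n + 1 + S.card) = a + q * (n + S.card) + q := by ring
    have e2 : a + q * (n + (S.card + 1)) = a + q * (n + S.card) + q := by ring
    rw [e1, e2, this]; push_cast; ring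

/-- Quasi-polynomials with period `q`. -/
def QP (q : ℕ) (f : ℕ → ℚ) : Prop :=
  ∃ g : ℕ → Polynomial ℚ, ∀ r, f r = (g (r % q)).eval (r : ℚ)

lemma QP_of_diff {q : ℕ} (hq : 0 < q) (f : ℕ → ℚ) (k : ℕ)
    (h : ∀ a n, (fwdDiff 1)^[k] (fun n : ℕ => f (a + q * n)) n = 0) : QP q f := by
  let c : ℕ → ℕ → ℚ := fun a j => (fwdDiff 1)^[j] (fun n : ℕ => f (a + q * n)) 0
  have hc : ∀ a j, k ≤ j → c a j = 0 := by
    intro a j hj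
    obtain ⟨t, rfl⟩ := Nat.exists_eq_add_of_le hj
    simp only [c]
    rw [add_comm, Function.iterate_add_apply]
    have : (fwdDiff 1)^[k] (fun n : ℕ => f (a + q * n)) = 0 := funext (h a)
    rw [this]
    clear hj
    have hz : fwdDiff 1 (0 : ℕ → ℚ) = 0 := by funext n; simp [fwdDiff]
    rw [Function.iterate_fixed hz]; rfl
  refine ⟨fun a => ∑ j ∈ range k, Polynomial.C (c a j / (j.factorial : ℚ)) *
    (descPochhammer ℚ j).comp (Polynomial.C ((q : ℚ)⁻¹) * (Polynomial.X - Polynomial.C (a : ℚ))),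
    fun r => ?_⟩
  set a := r % q
  set n := r / q
  have hr : r = a + q * n := (Nat.mod_add_div r q).symm
  have hqq : (q : ℚ) ≠ 0 := by positivity
  have hn : (q : ℚ)⁻¹ * ((r : ℚ) - a) = n := by
    rw [hr]; push_cast; field_simp; ring
  rw [Polynomial.eval_finsetSum]
  simp only [Polynomial.eval_mul, Polynomial.eval_C, Polynomial.eval_comp, Polynomial.eval_sub,
    Polynomial.eval_X, hn, descPochhammer_eval_eq_descFactorial]
  have key := shift_eq_sum_fwdDiff_iter 1 (fun n : ℕ => f (a + q * n)) n 0
  simp only [smul_eq_mul, mul_one, zero_add] at key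
  rw [← hr] at key
  rw [key]
  have hterm : ∀ j, n.choose j • (fwdDiff 1)^[j] (fun n : ℕ => f (a + q * n)) 0 =
      c a j / (j.factorial : ℚ) * (n.descFactorial j : ℚ) := by
    intro j
    have : (n.descFactorial j : ℚ) = j.factorial * n.choose j := by
      exact_mod_cast Nat.descFactorial_eq_factorial_mul_choose n j
    rw [this, nsmul_eq_mul]
    have hf : (j.factorial : ℚ) ≠ 0 := by positivity
    field_simp
    simp only [c]
  rw [Finset.sum_congr rfl fun j _ => hterm j]
  rcases le_total k (n + 1) with hk | hk
  · symm
    refine Finset.sum_subset (Finset.range_mono hk) fun j _ hj => ?_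
    rw [hc a j (by simpa using hj)]; simp
  · refine Finset.sum_subset (Finset.range_mono hk) fun j _ hj => ?_
    have : n < j := by simp at hj; omega
    rw [Nat.descFactorial_of_lt this]; simp

lemma QP_X {m d : ℕ} {v : Fin (m + 1) → Fin d → ℝ} {q : ℕ} (hq : 0 < q)
    (hv : ∀ i, ∃ z : Fin d → ℤ, (q : ℝ) • v i = fun j => (z j : ℝ))
    {W : Finset (Fin (m + 1))}
    (hfin : ∀ S r, (X v q W S r).Finite) : QP q fun r => ((X v q W ∅ r).ncard : ℚ) := by
  refine QP_of_diff hq _ W.card fun a n => ?_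
  rw [X_diff hq hv hfin a W (Finset.Subset.refl W) n, X_top]
  · simp
  · nlinarith [Nat.zero_le (q * n)]

lemma QP_sum {q : ℕ} {ι : Type*} (s : Finset ι) (f : ι → ℕ → ℚ) (h : ∀ i ∈ s, QP q (f i)) :
    QP q fun r => ∑ i ∈ s, f i r := by
  choose! g hg using h
  refine ⟨fun a => ∑ i ∈ s, g i a, fun r => ?_⟩
  rw [Polynomial.eval_finsetSum]
  exact Finset.sum_congr rfl fun i hi => hg i hi r


lemma mem_hull_iff {m d : ℕ} (v : Fin (m + 1) → Fin d → ℝ) (x : Fin d → ℝ) :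
    x ∈ convexHull ℝ (Set.range v) ↔
      ∃ l : Fin (m + 1) → ℝ, (∀ i, 0 ≤ l i) ∧ ∑ i, l i = 1 ∧ ∑ i, l i • v i = x := by
  constructor
  · intro hx
    have hsub : convexHull ℝ (Set.range v) ⊆
        (Fintype.linearCombination ℝ v) '' stdSimplex ℝ (Fin (m + 1)) := by
      refine convexHull_min ?_ ((convex_stdSimplex ℝ _).linear_image _)
      rintro _ ⟨i, rfl⟩
      exact ⟨Pi.single i 1, single_mem_stdSimplex ℝ i, by simp⟩
    obtain ⟨l, hl, rfl⟩ := hsub hx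
    exact ⟨l, hl.1, hl.2, by simp [Fintype.linearCombination_apply]⟩
  · rintro ⟨l, h0, h1, h2⟩
    exact mem_convexHull_of_exists_fintype l v h0 h1 (fun i => ⟨i, rfl⟩) h2

lemma mem_smul_iff {m d : ℕ} (v : Fin (m + 1) → Fin d → ℝ) (r : ℕ) (x : Fin d → ℝ) :
    x ∈ (r : ℝ) • convexHull ℝ (Set.range v) ↔
      ∃ l : Fin (m + 1) → ℝ, (∀ i, 0 ≤ l i) ∧ ∑ i, l i = r ∧ ∑ i, l i • v i = x := by
  rw [Set.mem_smul_set]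
  constructor
  · rintro ⟨y, hy, rfl⟩
    obtain ⟨l, h0, h1, rfl⟩ := (mem_hull_iff v y).mp hy
    refine ⟨fun i => r * l i, fun i => mul_nonneg r.cast_nonneg (h0 i), ?_, ?_⟩
    · rw [← mul_sum, h1, mul_one]
    · simp only [mul_smul, smul_sum]
  · rintro ⟨l, h0, h1, rfl⟩
    rcases Nat.eq_zero_or_pos r with rfl | hr
    · have hl : ∀ i, l i = 0 := fun i =>
        (Finset.sum_eq_zero_iff_of_nonneg (fun i _ => h0 i)).mp (by simpa using h1) i
          (Finset.mem_univ i)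
      exact ⟨v 0, subset_convexHull ℝ _ ⟨0, rfl⟩, by simp [hl]⟩
    · have hr' : (r : ℝ) ≠ 0 := by positivity
      refine ⟨∑ i, ((r : ℝ)⁻¹ * l i) • v i, (mem_hull_iff v _).mpr
        ⟨fun i => (r : ℝ)⁻¹ * l i, fun i => mul_nonneg (by positivity) (h0 i), ?_, rfl⟩, ?_⟩
      · rw [← mul_sum, h1, inv_mul_cancel₀ hr']
      · simp only [mul_smul, ← smul_sum]
        rw [smul_inv_smul₀ hr']

lemma finite_lattice {d : ℕ} {B : Set (Fin d → ℝ)} (hB : Bornology.IsBounded B) :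
    {x : Fin d → ℤ | (fun i => (x i : ℝ)) ∈ B}.Finite := by
  obtain ⟨R, hR⟩ := hB.exists_norm_le
  refine (Set.finite_Icc (fun _ : Fin d => -⌈R⌉) (fun _ => ⌈R⌉)).subset fun x hx => ?_
  have h := hR _ hx
  have hi : ∀ i, |(x i : ℝ)| ≤ R := fun i => (norm_le_pi_norm (fun i => (x i : ℝ)) i).trans h
  constructor
  · intro i
    have h1 := (abs_le.mp (hi i)).1
    have h2 := Int.le_ceil R
    have : ((-⌈R⌉ : ℤ) : ℝ) ≤ x i := by push_cast; linarith
    exact_mod_cast this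
  · intro i
    have h1 := (abs_le.mp (hi i)).2
    have h2 := Int.le_ceil R
    have : (x i : ℝ) ≤ (⌈R⌉ : ℤ) := by linarith
    exact_mod_cast this

lemma QP_count {m d : ℕ} {v : Fin (m + 1) → Fin d → ℝ} {q : ℕ} (hq : 0 < q)
    (hv : ∀ i, ∃ z : Fin d → ℤ, (q : ℝ) • v i = fun j => (z j : ℝ)) :
    QP q fun r => (Set.ncard {x : Fin d → ℤ | (fun i => (x i : ℝ)) ∈
      (r : ℝ) • convexHull ℝ (Set.range v)} : ℚ) := by
  classical
  let Y : ℕ → Set (Fin (m + 1) → ℝ) := fun r => {l | Opt v l ∧ ∑ i, l i = r ∧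
    (∃ z : Fin d → ℤ, ∑ i, l i • v i = fun j => (z j : ℝ))}
  let Lat : ℕ → Set (Fin d → ℤ) := fun r => {x : Fin d → ℤ | (fun i => (x i : ℝ)) ∈
      (r : ℝ) • convexHull ℝ (Set.range v)}
  let ψ : (Fin (m + 1) → ℝ) → (Fin d → ℤ) := fun l j => ⌊(∑ i, l i • v i) j⌋
  have hψ : ∀ r, ∀ l ∈ Y r, (fun j => ((ψ l j : ℤ) : ℝ)) = ∑ i, l i • v i := by
    rintro r l ⟨-, -, z, hz⟩
    funext j
    simp only [ψ, hz, Int.floor_intCast]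
  have hinj : ∀ r, Set.InjOn ψ (Y r) := by
    intro r l hl μ hμ h
    refine opt_unique hl.1 hμ.1 (hl.2.1.trans hμ.2.1.symm) ?_
    rw [← hψ r l hl, ← hψ r μ hμ, h]
  have himg : ∀ r, ψ '' Y r = Lat r := by
    intro r
    ext x
    constructor
    · rintro ⟨l, hl, rfl⟩
      change (fun j => ((ψ l j : ℤ) : ℝ)) ∈ (r : ℝ) • convexHull ℝ (Set.range v)
      rw [hψ r l hl]
      exact (mem_smul_iff v r _).mpr ⟨l, hl.1.1, hl.2.1, rfl⟩
    · intro hx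
      obtain ⟨μ, h0, h1, h2⟩ := (mem_smul_iff v r _).mp hx
      obtain ⟨l, hl, h3, h4⟩ := opt_exists v μ h0
      refine ⟨l, ⟨hl, h3.trans h1, x, h4.trans h2⟩, ?_⟩
      funext j
      simp only [ψ, h4, h2, Int.floor_intCast]
  have hbd : ∀ r : ℕ, Bornology.IsBounded ((r : ℝ) • convexHull ℝ (Set.range v)) := fun r =>
    ((isBounded_convexHull.mpr (Set.finite_range v).isBounded)).smul₀ (r : ℝ)
  have hLfin : ∀ r, (Lat r).Finite := fun r => finite_lattice (hbd r)
  have hYfin : ∀ r, (Y r).Finite := fun r =>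
    Set.Finite.of_finite_image (by rw [himg r]; exact hLfin r) (hinj r)
  have hXfin : ∀ W S r, (X v q W S r).Finite := fun W S r =>
    (hYfin r).subset fun l hl => ⟨hl.1, hl.2.1, hl.2.2.1⟩
  have hcount : ∀ r, ((Lat r).ncard : ℚ) =
      ∑ W : Finset (Fin (m + 1)), ((X v q W ∅ r).ncard : ℚ) := by
    intro r
    let σ : (Fin (m + 1) → ℝ) → Finset (Fin (m + 1)) := fun l => univ.filter fun i => i = 0 ∨ 0 < l i
    rw [← himg r, (hinj r).ncard_image, Set.ncard_eq_toFinset_card _ (hYfin r),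
      Finset.card_eq_sum_card_fiberwise (f := σ) (t := univ) (by intro l _; simp)]
    push_cast
    refine Finset.sum_congr rfl fun W _ => ?_
    rw [← Set.ncard_coe_finset]
    congr 2
    ext l
    simp only [coe_filter, Set.Finite.mem_toFinset]
    constructor
    · rintro ⟨h, hW⟩
      refine ⟨h.1, h.2.1, h.2.2, fun i => ?_, by simp⟩
      rw [← hW]; simp [σ]
    · rintro ⟨h1, h2, h3, h4, -⟩
      refine ⟨⟨h1, h2, h3⟩, ?_⟩
      ext i
      rw [h4 i]; simp [σ]
  have := QP_sum (q := q) (univ : Finset (Finset (Fin (m + 1))))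
    (fun W r => ((X v q W ∅ r).ncard : ℚ)) (fun W _ => QP_X hq hv (hXfin W))
  obtain ⟨g, hg⟩ := this
  exact ⟨g, fun r => (hcount r).trans (hg r)⟩

/-- A polynomial with the right asymptotics along a progression has the right leading term. -/
lemma poly_lead {d q : ℕ} (hq : 0 < q) (i : ℕ) (g : Polynomial ℚ) (N : ℕ → ℝ) (V : ℝ) (hV : 0 < V)
    (hN : Tendsto (fun r : ℕ => N r / (r : ℝ) ^ d) atTop (𝓝 V))
    (hg : ∀ n : ℕ, N (i + q * n) = ((g.eval ((i + q * n : ℕ) : ℚ) : ℚ) : ℝ)) :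
    g.natDegree = d ∧ (g.coeff d : ℝ) = V := by
  let G : Polynomial ℝ := g.map (algebraMap ℚ ℝ)
  have hGe : ∀ x : ℚ, G.eval (x : ℝ) = ((g.eval x : ℚ) : ℝ) := fun x => by
    change Polynomial.eval ((algebraMap ℚ ℝ) x) (g.map (algebraMap ℚ ℝ)) = _
    rw [Polynomial.eval_map, Polynomial.eval₂_at_apply]
    rfl
  have hsub : Tendsto (fun n : ℕ => i + q * n) atTop atTop :=
    tendsto_atTop_mono (fun n => (Nat.le_mul_of_pos_left n hq).trans (Nat.le_add_left _ _)) tendsto_id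
  have hsubR : Tendsto (fun n : ℕ => ((i + q * n : ℕ) : ℝ)) atTop atTop :=
    tendsto_natCast_atTop_atTop.comp hsub
  have h1 : Tendsto (fun n : ℕ => G.eval ((i + q * n : ℕ) : ℝ) /
      (Polynomial.X ^ d : Polynomial ℝ).eval ((i + q * n : ℕ) : ℝ)) atTop (𝓝 V) := by
    refine (hN.comp hsub).congr fun n => ?_
    have := hGe ((i + q * n : ℕ) : ℚ)
    simp only [Function.comp, hg n, ← this, Polynomial.eval_pow, Polynomial.eval_X]
    norm_cast
  have hQ : (Polynomial.X ^ d : Polynomial ℝ) ≠ 0 := pow_ne_zero _ Polynomial.X_ne_zero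
  have hnat : G.natDegree = g.natDegree := Polynomial.natDegree_map _
  rcases lt_trichotomy G.degree (Polynomial.X ^ d : Polynomial ℝ).degree with h | h | h
  · have := (Polynomial.div_tendsto_atTop_zero_of_degree_lt _ _ h).comp hsubR
    exact absurd (tendsto_nhds_unique h1 this) hV.ne'
  · have := (Polynomial.div_tendsto_atTop_leadingCoeff_div_of_degree_eq _ _ h).comp hsubR
    have hlead := tendsto_nhds_unique h1 this
    have hd : g.natDegree = d := by
      rw [← hnat, Polynomial.natDegree_eq_natDegree h, Polynomial.natDegree_X_pow]
    refine ⟨hd, ?_⟩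
    rw [hlead, Polynomial.leadingCoeff_X_pow, div_one, Polynomial.leadingCoeff, hnat, hd]
    simp [G]
  · have := (Polynomial.abs_div_tendsto_atTop_atTop_of_degree_gt _ _ h hQ).comp hsubR
    exact absurd h1.abs (not_tendsto_nhds_of_tendsto_atTop this _)

/-- Asymptotics of the lattice point count. -/
lemma count_tendsto {d : ℕ} (P : Set (Fin d → ℝ)) (hc : Convex ℝ P) (hcomp : IsCompact P) :
    Tendsto (fun r : ℕ => (Set.ncard {x : Fin d → ℤ | (fun i => (x i : ℝ)) ∈ (r : ℝ) • P} : ℝ) /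
      (r : ℝ) ^ d) atTop (𝓝 (MeasureTheory.volume P).toReal) := by
  have h := tendsto_card_div_pow_atTop_volume P hcomp.isBounded hcomp.measurableSet
    (hc.addHaar_frontier MeasureTheory.volume)
  rw [Fintype.card_fin] at h
  refine h.congr' ?_
  filter_upwards [eventually_gt_atTop 0] with r hr
  have hr' : (r : ℝ) ≠ 0 := by positivity
  congr 2
  rw [Nat.card_coe_set_eq]
  symm
  refine Set.ncard_congr (fun x _ => (r : ℝ)⁻¹ • (fun i => (x i : ℝ))) ?_ ?_ ?_
  · intro x hx
    refine ⟨(Set.mem_smul_set_iff_inv_smul_mem₀ hr' _ _).mp hx, ?_⟩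
    refine Set.smul_mem_smul_set ?_
    rw [SetLike.mem_coe, (Pi.basisFun ℝ (Fin d)).mem_span_iff_repr_mem ℤ]
    intro i
    exact ⟨x i, by simp⟩
  · intro x y _ _ hxy
    have := smul_right_injective (Fin d → ℝ) (inv_ne_zero hr') hxy
    funext i
    exact_mod_cast congrFun this i
  · rintro y ⟨hyP, w, hw, rfl⟩
    rw [SetLike.mem_coe, (Pi.basisFun ℝ (Fin d)).mem_span_iff_repr_mem ℤ] at hw
    choose z hz using hw
    have hzw : (fun i => (z i : ℝ)) = w := by
      funext i; simpa using hz i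
    refine ⟨z, ?_, by simp only [hzw]⟩
    change (fun i => (z i : ℝ)) ∈ (r : ℝ) • P
    rw [hzw]
    exact (Set.mem_smul_set_iff_inv_smul_mem₀ hr' _ _).mpr hyP

end EhrhartAux

/-- Ehrhart's theorem, part 1: for a rational polytope `P ⊆ ℝ^d` of dimension `d`
(the convex hull of finitely many rational points, affinely spanning `ℝ^d`), the
lattice-point counting function `L(P, r) = Card(rP ∩ ℤ^d)` is a quasi-polynomial of
degree `d` whose constituents all have leading coefficient equal to the Euclidean
volume of `P`. -/
theorem ehrhart_quasipolynomial
    (d : ℕ) (hd : 0 < d) (P : Set (Fin d → ℝ))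
    (hP : ∃ V : Finset (Fin d → ℚ),
      P = convexHull ℝ ((fun v : Fin d → ℚ => fun i => ((v i : ℝ))) '' ↑V))
    (hdim : affineSpan ℝ P = ⊤) :
    ∃ (q : ℕ) (hq : 0 < q) (g : Fin q → Polynomial ℚ),
      (∀ i : Fin q, (g i).natDegree = d ∧
        ((g i).coeff d : ℝ) = (MeasureTheory.volume P).toReal) ∧
      ∀ r : ℕ,
        (Set.ncard {x : Fin d → ℤ | (fun i => (x i : ℝ)) ∈ (r : ℝ) • P} : ℚ)
          = (g ⟨r % q, Nat.mod_lt r hq⟩).eval (r : ℚ) := by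
  obtain ⟨V, hPV⟩ := hP
  have hint : (interior P).Nonempty := by
    rw [hPV] at hdim ⊢
    exact (convex_convexHull ℝ _).interior_nonempty_iff_affineSpan_eq_top.mpr hdim
  have hVne : V.Nonempty := by
    by_contra h
    rw [Finset.not_nonempty_iff_eq_empty] at h
    obtain ⟨x, hx⟩ := hint.mono interior_subset
    rw [hPV, h] at hx
    simp at hx
  -- enumerate the vertices
  obtain ⟨m, hm⟩ : ∃ m, V.card = m + 1 := ⟨V.card - 1, by have := hVne.card_pos; omega⟩
  let u : Fin (m + 1) → Fin d → ℚ := fun i => ((V.equivFin.trans (finCongr hm)).symm i).1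
  let v : Fin (m + 1) → Fin d → ℝ := fun i j => ((u i j : ℚ) : ℝ)
  have hrange : (fun v : Fin d → ℚ => fun i => ((v i : ℝ))) '' (V : Set (Fin d → ℚ)) =
      Set.range v := by
    ext x
    constructor
    · rintro ⟨w, hw, rfl⟩
      refine ⟨(V.equivFin.trans (finCongr hm)) ⟨w, hw⟩, ?_⟩
      funext j
      simp only [v, u, Equiv.symm_apply_apply]
    · rintro ⟨i, rfl⟩
      exact ⟨u i, ((V.equivFin.trans (finCongr hm)).symm i).2, rfl⟩
  rw [hrange] at hPV
  -- a common denominator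
  let q : ℕ := ∏ i, ∏ j, (u i j).den
  have hq : 0 < q := Finset.prod_pos fun i _ => Finset.prod_pos fun j _ => (u i j).den_pos
  have hv : ∀ i, ∃ z : Fin d → ℤ, (q : ℝ) • v i = fun j => (z j : ℝ) := by
    intro i
    have : ∀ j, ∃ z : ℤ, (q : ℝ) * v i j = z := by
      intro j
      have hdvd : (u i j).den ∣ q :=
        (Finset.dvd_prod_of_mem (fun j => (u i j).den) (Finset.mem_univ j)).trans
          (Finset.dvd_prod_of_mem (fun i => ∏ j, (u i j).den) (Finset.mem_univ i))
      obtain ⟨c, hc⟩ := hdvd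
      refine ⟨(c : ℤ) * (u i j).num, ?_⟩
      have h1 : (q : ℚ) * u i j = c * (u i j).num := by
        rw [hc]
        push_cast
        have := Rat.den_mul_eq_num (u i j)
        rw [mul_comm ((u i j).den : ℚ), mul_assoc, this]
      have h2 : (((q : ℚ) * u i j : ℚ) : ℝ) = ((c * (u i j).num : ℚ) : ℝ) := by rw [h1]
      push_cast at h2 ⊢
      exact h2
    choose z hz using this
    exact ⟨z, funext hz⟩
  have hconv : Convex ℝ P := by rw [hPV]; exact convex_convexHull ℝ _
  have hcomp : IsCompact P := by rw [hPV]; exact (Set.finite_range v).isCompact_convexHull ℝ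
  have hvol : 0 < (MeasureTheory.volume P).toReal := by
    refine ENNReal.toReal_pos ?_ hcomp.measure_lt_top.ne
    exact (MeasureTheory.Measure.measure_pos_of_nonempty_interior _ hint).ne'
  obtain ⟨g, hg⟩ := EhrhartAux.QP_count hq hv
  rw [← hPV] at hg
  refine ⟨q, hq, fun i => g i, fun i => ?_, fun r => hg r⟩
  refine EhrhartAux.poly_lead hq (i : ℕ) (g i) _ _ hvol
    (EhrhartAux.count_tendsto P hconv hcomp) fun n => ?_
  have h := hg ((i : ℕ) + q * n)
  rw [Nat.add_mul_mod_self_left, Nat.mod_eq_of_lt i.2] at h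
  rw [← h]
  norm_cast
end

section
/- Let P ⊆ ℝ^d be a rational polytope of dimension d. Then the counting function L(P, r) = Card(rP ∩ ℤ^d) agrees with a quasi-polynomial whose period divides 𝒟(P) = min{n ∈ ℕ, n ≥ 1 : nP is a lattice polytope}; in particular, if P is itself a lattice polytope, then L(P, r) is a polynomial in r with rational coefficients. -/
open scoped Pointwise

/-- A lattice polytope in `ℝ^d`: the convex hull of finitely many integer points. -/
def IsLatticePolytope (d : ℕ) (Q : Set (Fin d → ℝ)) : Prop :=
  ∃ V : Finset (Fin d → ℤ),
    Q = convexHull ℝ ((fun v : Fin d → ℤ => fun i => ((v i : ℝ))) '' ↑V)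


def EhrQP (D : ℕ) (f : ℕ → ℚ) : Prop :=
  ∀ i : ℕ, ∃ p : Polynomial ℚ, ∀ r : ℕ, r % D = i → f r = p.eval (r : ℚ)

lemma EhrQP.sum {D : ℕ} {ι : Type*} (s : Finset ι) (f : ι → ℕ → ℚ)
    (h : ∀ b ∈ s, EhrQP D (f b)) : EhrQP D (fun r => ∑ b ∈ s, f b r) := by
  intro i
  choose! p hp using fun b hb => h b hb i
  refine ⟨∑ b ∈ s, p b, fun r hr => ?_⟩
  rw [Polynomial.eval_finsetSum]
  exact Finset.sum_congr rfl fun b hb => hp b hb r hr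

def EhrN {n : ℕ} (D : ℕ) (T : Finset (Fin (n+1))) (lev r : ℕ) : Set (Fin (n+1) → ℕ) :=
  {k | (∀ j, j ∉ T → k j = 0) ∧ D * ∑ j, k j + lev = r}

lemma EhrN_finite {n : ℕ} (D : ℕ) (hD : 0 < D) (T : Finset (Fin (n+1))) (lev r : ℕ) :
    (EhrN D T lev r).Finite := by
  refine (Set.finite_Icc (0 : Fin (n+1) → ℕ) (fun _ => r)).subset ?_
  rintro k ⟨-, hk⟩
  refine ⟨fun j => Nat.zero_le _, fun j => ?_⟩
  have h1 : k j ≤ ∑ j, k j := Finset.single_le_sum (fun _ _ => Nat.zero_le _) (Finset.mem_univ j)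
  show k j ≤ r
  nlinarith

lemma EhrN_card {n : ℕ} (D : ℕ) (hD : 0 < D) (T : Finset (Fin (n+1))) (lev m : ℕ) :
    (EhrN D T lev (lev + D * m)).ncard = (T.card + m - 1).choose m := by
  classical
  rw [← Finset.card_finsuppAntidiag_nat_eq_choose, ← Set.ncard_coe_finset]
  refine Set.ncard_congr (fun k _ => Finsupp.equivFunOnFinite.symm k) ?_ ?_ ?_
  · rintro k ⟨h0, h1⟩
    simp only [Finset.mem_coe, Finset.mem_finsuppAntidiag]
    have h2 : ∑ j, k j = m := by
      have : D * ∑ j, k j = D * m := by omega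
      exact Nat.eq_of_mul_eq_mul_left hD this
    constructor
    · rw [← h2]
      exact Finset.sum_subset (Finset.subset_univ _) (fun j _ hj => h0 j hj)
    · intro j hj
      by_contra hjT
      simp at hj
      exact hj (h0 j hjT)
  · intro a b _ _ h
    exact Finsupp.equivFunOnFinite.symm.injective h
  · intro f hf
    simp only [Finset.mem_coe, Finset.mem_finsuppAntidiag] at hf
    have h0 : ∀ j, j ∉ T → f j = 0 := fun j hj => by
      by_contra h
      exact hj (hf.2 (Finsupp.mem_support_iff.2 h))
    refine ⟨f, ⟨h0, ?_⟩, by ext; simp⟩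
    rw [← Finset.sum_subset (Finset.subset_univ T) (fun j _ hj => h0 j hj), hf.1]
    ring

lemma EhrN_qp {n : ℕ} (D : ℕ) (hD : 0 < D) (T : Finset (Fin (n+1))) (p lev : ℕ)
    (hT : T.card = p + 1) (hlev : lev < D * (p+1)) :
    EhrQP D (fun r => ((EhrN D T lev r).ncard : ℚ)) := by
  intro i
  by_cases hi : i = lev % D
  · refine ⟨Polynomial.C (1 / (p.factorial : ℚ)) * (descPochhammer ℚ p).comp
      (Polynomial.C (1 / (D : ℚ)) * (Polynomial.X + Polynomial.C ((D * p : ℚ) - lev))), ?_⟩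
    intro r hr
    have hmod : (r + D * p) ≡ lev [MOD D] := by
      unfold Nat.ModEq
      rw [Nat.add_mul_mod_self_left, hr, hi]
    have hex : ∃ y : ℕ, r + D * p = lev + D * y := by
      rcases le_or_gt lev (r + D * p) with h | h
      · obtain ⟨y, hy⟩ := (Nat.modEq_iff_dvd' h).1 hmod.symm
        exact ⟨y, by omega⟩
      · exfalso
        obtain ⟨y, hy⟩ := (Nat.modEq_iff_dvd' h.le).1 hmod
        have : y ≠ 0 := by rintro rfl; omega
        have : D * 1 ≤ D * y := Nat.mul_le_mul_left _ (by omega)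
        rw [Nat.mul_add] at hlev
        omega
    obtain ⟨y, hy⟩ := hex
    have hD' : (D : ℚ) ≠ 0 := by positivity
    have hy' : (r : ℚ) + D * p = lev + D * y := by exact_mod_cast hy
    have harg : 1 / (D : ℚ) * ((r : ℚ) + ((D * p : ℚ) - lev)) = y := by
      field_simp; linarith
    have hcard : (EhrN D T lev r).ncard = y.choose p := by
      rcases le_or_gt p y with h | h
      · obtain ⟨m, rfl⟩ := Nat.exists_eq_add_of_le h
        have : r = lev + D * m := by
          rw [Nat.mul_add] at hy; omega
        rw [this, EhrN_card D hD, hT]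
        rw [show p + 1 + m - 1 = p + m by omega]
        exact Nat.choose_symm_add.symm
      · rw [Nat.choose_eq_zero_of_lt h, Set.ncard_eq_zero (EhrN_finite D hD _ _ _)]
        ext k
        simp only [EhrN, Set.mem_ofPred_eq, Set.mem_empty_iff_false, iff_false, not_and]
        intro _ h2
        have : D * (y + 1) ≤ D * p := Nat.mul_le_mul_left _ h
        rw [Nat.mul_add] at this
        omega
    simp only [Polynomial.eval_mul, Polynomial.eval_C, Polynomial.eval_comp, Polynomial.eval_add,
      Polynomial.eval_X, harg, hcard, descPochhammer_eval_eq_descFactorial]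
    rw [Nat.descFactorial_eq_factorial_mul_choose]
    have : (p.factorial : ℚ) ≠ 0 := by positivity
    push_cast
    field_simp
  · refine ⟨0, fun r hr => ?_⟩
    have : EhrN D T lev r = ∅ := by
      ext k
      simp only [EhrN, Set.mem_ofPred_eq, Set.mem_empty_iff_false, iff_false, not_and]
      rintro _ h2
      apply hi
      rw [← hr, ← h2, Nat.mul_add_mod]
    simp [this]

/-- lexicographic positivity -/
def EhrLexPos {n : ℕ} (δ : Fin (n+1) → ℝ) : Prop := ∃ j, 0 < δ j ∧ ∀ i < j, δ i = 0

lemma EhrLexPos_or {n : ℕ} (δ : Fin (n+1) → ℝ) (h : δ ≠ 0) : EhrLexPos δ ∨ EhrLexPos (-δ) := by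
  classical
  have hne : ∃ j, δ j ≠ 0 := by
    by_contra! h'
    exact h (funext h')
  obtain ⟨j, hj, hmin⟩ := WellFounded.has_min (wellFounded_lt (α := Fin (n+1))) {j | δ j ≠ 0} hne
  have h0 : ∀ i < j, δ i = 0 := fun i hi => by
    by_contra h2
    exact hmin i h2 hi
  rcases lt_or_gt_of_ne hj with h1 | h1
  · right; exact ⟨j, by simpa using h1, fun i hi => by simp [h0 i hi]⟩
  · left; exact ⟨j, h1, h0⟩

lemma Ehr_exists_lexmax {n : ℕ} (K : Set (Fin (n+1) → ℝ)) (hK : IsCompact K) (hne : K.Nonempty) :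
    ∃ x ∈ K, ∀ y ∈ K, ¬ EhrLexPos (y - x) := by
  have key : ∀ m : ℕ, ∃ L ⊆ K, IsCompact L ∧ L.Nonempty ∧ ∀ x ∈ L, ∀ y ∈ K,
      (∀ j : Fin (n+1), (j : ℕ) < m → (∀ i < j, y i = x i) → y j ≤ x j) ∧
      ((∀ j : Fin (n+1), (j : ℕ) < m → y j = x j) → y ∈ L) := by
    intro m
    induction m with
    | zero => exact ⟨K, subset_rfl, hK, hne, fun x hx y hy => ⟨by simp, fun _ => hy⟩⟩
    | succ m ih =>
      obtain ⟨L, hLK, hLc, hLn, hL⟩ := ih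
      by_cases hm : m < n + 1
      · let e : Fin (n+1) := ⟨m, hm⟩
        have hcont : Continuous (fun x : Fin (n+1) → ℝ => x e) := continuous_apply e
        obtain ⟨z, hz, hzmax⟩ := hLc.exists_isMaxOn hLn hcont.continuousOn
        refine ⟨L ∩ {x | x e = z e}, fun x hx => hLK hx.1,
          hLc.inter_right (isClosed_eq hcont continuous_const), ⟨z, hz, rfl⟩, ?_⟩
        rintro x ⟨hx, hxe⟩ y hy
        constructor
        · intro j hj hij
          rcases Nat.lt_succ_iff_lt_or_eq.1 hj with h | h
          · exact (hL x hx y hy).1 j h hij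
          · have hje : j = e := Fin.ext h
            subst hje
            rw [hxe]
            exact hzmax ((hL x hx y hy).2 (fun i hi => hij i hi))
        · intro h
          refine ⟨(hL x hx y hy).2 (fun j hj => h j (by omega)), ?_⟩
          have := h e (Nat.lt_succ_self m)
          show y e = z e
          rw [this]; exact hxe
      · refine ⟨L, hLK, hLc, hLn, fun x hx y hy => ⟨fun j hj => ?_, fun h => ?_⟩⟩
        · exact (hL x hx y hy).1 j (by have := j.2; omega)
        · exact (hL x hx y hy).2 (fun j hj => h j (by omega))
  obtain ⟨L, hLK, hLc, ⟨x, hx⟩, hL⟩ := key (n+1)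
  refine ⟨x, hLK hx, fun y hy => ?_⟩
  rintro ⟨j, hj, hi⟩
  have := (hL x hx y hy).1 j j.2 (fun i hij => by have := hi i hij; simp at this; linarith)
  simp at hj
  linarith

def EhrGood {n d : ℕ} (u : Fin (n+1) → Fin d → ℤ) (φ : Fin (n+1) → ℝ) : Prop :=
  ∀ δ : Fin (n+1) → ℝ, (∀ i, ∑ j, δ j * (u j i : ℝ) = 0) → ∑ j, δ j = 0 →
    (∀ j, j ≠ 0 → φ j = 0 → 0 ≤ δ j) → ¬ EhrLexPos δ

lemma EhrGood.congr {n d : ℕ} {u : Fin (n+1) → Fin d → ℤ} {φ ψ : Fin (n+1) → ℝ}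
    (h : EhrGood u φ) (hs : ∀ j, j ≠ 0 → φ j = 0 → ψ j = 0) : EhrGood u ψ :=
  fun δ h1 h2 h3 => h δ h1 h2 fun j hj hφ => h3 j hj (hs j hj hφ)

lemma EhrGood.unique {n d : ℕ} {u : Fin (n+1) → Fin d → ℤ} {φ ψ : Fin (n+1) → ℝ}
    (hφ : EhrGood u φ) (hψ : EhrGood u ψ) (hφ0 : ∀ j, 0 ≤ φ j) (hψ0 : ∀ j, 0 ≤ ψ j)
    (h1 : ∀ i, ∑ j, φ j * (u j i : ℝ) = ∑ j, ψ j * (u j i : ℝ))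
    (h2 : ∑ j, φ j = ∑ j, ψ j) : φ = ψ := by
  by_contra hne
  rcases EhrLexPos_or (φ - ψ) (sub_ne_zero.2 hne) with h | h
  · refine hψ (φ - ψ) (fun i => ?_) ?_ (fun j _ hj => ?_) h
    · simp [sub_mul, Finset.sum_sub_distrib, h1]
    · simp [Finset.sum_sub_distrib, h2]
    · simpa [hj] using hφ0 j
  · refine hφ (-(φ - ψ)) (fun i => ?_) ?_ (fun j _ hj => ?_) h
    · simp [sub_mul, Finset.sum_sub_distrib, h1]
    · simp [Finset.sum_sub_distrib, h2]
    · simpa [hj] using hψ0 j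

lemma Ehr_exists_good {n d : ℕ} (u : Fin (n+1) → Fin d → ℤ) (l : Fin (n+1) → ℝ)
    (hl : ∀ j, 0 ≤ l j) : ∃ φ : Fin (n+1) → ℝ, (∀ j, 0 ≤ φ j) ∧ EhrGood u φ ∧
      (∀ i, ∑ j, φ j * (u j i : ℝ) = ∑ j, l j * (u j i : ℝ)) ∧ ∑ j, φ j = ∑ j, l j := by
  let K : Set (Fin (n+1) → ℝ) := {φ | (∀ j, 0 ≤ φ j) ∧
      (∀ i, ∑ j, φ j * (u j i : ℝ) = ∑ j, l j * (u j i : ℝ)) ∧ ∑ j, φ j = ∑ j, l j}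
  have hclosed : IsClosed K := by
    have : K = (⋂ j, {φ | 0 ≤ φ j}) ∩
      ((⋂ i, {φ | ∑ j, φ j * (u j i : ℝ) = ∑ j, l j * (u j i : ℝ)}) ∩
        {φ | ∑ j, φ j = ∑ j, l j}) := by
      ext φ; simp [K]
    rw [this]
    refine IsClosed.inter (isClosed_iInter fun j => isClosed_le continuous_const (by fun_prop)) ?_
    exact IsClosed.inter (isClosed_iInter fun i => isClosed_eq (by fun_prop) continuous_const)
      (isClosed_eq (by fun_prop) continuous_const)
  have hcomp : IsCompact K := by
    refine (isCompact_Icc (a := (0 : Fin (n+1) → ℝ)) (b := fun _ => ∑ j, l j)).of_isClosed_subset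
      hclosed ?_
    rintro φ ⟨h0, -, h2⟩
    refine ⟨h0, fun j => ?_⟩
    show φ j ≤ ∑ j, l j
    rw [← h2]
    exact Finset.single_le_sum (fun i _ => h0 i) (Finset.mem_univ j)
  obtain ⟨φ, ⟨h0, h1, h2⟩, hmax⟩ := Ehr_exists_lexmax K hcomp ⟨l, hl, fun _ => rfl, rfl⟩
  refine ⟨φ, h0, ?_, h1, h2⟩
  intro δ d1 d2 d3 hpos
  have hδ0 : 0 ≤ δ 0 := by
    obtain ⟨j, hj, hi⟩ := hpos
    rcases Fin.eq_zero_or_eq_succ j with rfl | ⟨k, rfl⟩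
    · exact hj.le
    · exact (hi 0 (Fin.succ_pos k)).ge
  have hev : ∀ j, ∀ᶠ ε in nhdsWithin (0 : ℝ) (Set.Ioi 0), 0 ≤ φ j + ε * δ j := by
    intro j
    rcases (h0 j).eq_or_lt with h | h
    · have : 0 ≤ δ j := by
        by_cases hj : j = 0
        · rw [hj]; exact hδ0
        · exact d3 j hj h.symm
      filter_upwards [self_mem_nhdsWithin] with ε hε
      have hε : 0 < ε := hε
      rw [← h]; positivity
    · have hc : Continuous (fun ε : ℝ => φ j + ε * δ j) := by fun_prop
      have : ∀ᶠ ε in nhds (0 : ℝ), 0 < φ j + ε * δ j :=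
        hc.continuousAt.eventually (lt_mem_nhds (by simpa using h))
      exact (this.filter_mono nhdsWithin_le_nhds).mono fun _ h => h.le
  obtain ⟨ε, hε, hεpos⟩ := ((Filter.eventually_all.2 hev).and self_mem_nhdsWithin).exists
  have hεpos : 0 < ε := hεpos
  apply hmax (φ + ε • δ)
  · refine ⟨fun j => by simpa using hε j, fun i => ?_, ?_⟩
    · rw [← h1 i]
      simp only [Pi.add_apply, Pi.smul_apply, smul_eq_mul, add_mul, Finset.sum_add_distrib]
      simp only [mul_assoc, ← Finset.mul_sum, d1 i]
      simp
    · rw [← h2]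
      simp [Finset.sum_add_distrib, ← Finset.mul_sum, d2]
  · obtain ⟨j, hj, hi⟩ := hpos
    refine ⟨j, by simp; positivity, fun i hij => by simp [hi i hij]⟩

def EhrL {n d : ℕ} (D : ℕ) (u : Fin (n+1) → Fin d → ℤ) (r : ℕ) : Set (Fin (n+1) → ℝ) :=
  {φ | (∀ j, 0 ≤ φ j) ∧ EhrGood u φ ∧ (∃ x : Fin d → ℤ, ∀ i, ∑ j, φ j * (u j i : ℝ) = x i) ∧
    D * ∑ j, φ j = r}

def EhrX {n d : ℕ} (D : ℕ) (u : Fin (n+1) → Fin d → ℤ) (r : ℕ) : Set (Fin d → ℤ) :=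
  {x | ∃ φ : Fin (n+1) → ℝ, (∀ j, 0 ≤ φ j) ∧ (∀ i, ∑ j, φ j * (u j i : ℝ) = x i) ∧
    D * ∑ j, φ j = r}

lemma EhrX_finite {n d : ℕ} (D : ℕ) (hD : 0 < D) (u : Fin (n+1) → Fin d → ℤ) (r : ℕ) :
    (EhrX D u r).Finite := by
  refine (Set.finite_Icc (fun i => -∑ j, (r : ℤ) * |u j i|)
    (fun i => ∑ j, (r : ℤ) * |u j i|)).subset ?_
  rintro x ⟨φ, h0, h1, h2⟩
  have hle : ∀ j, φ j ≤ r := fun j => by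
    have h3 : φ j ≤ ∑ j, φ j := Finset.single_le_sum (fun i _ => h0 i) (Finset.mem_univ j)
    have : (1 : ℝ) ≤ D := by exact_mod_cast hD
    nlinarith [h0 j]
  have hb : ∀ i, |(x i : ℝ)| ≤ ∑ j, (r : ℝ) * |(u j i : ℝ)| := fun i => by
    rw [← h1 i]
    refine (Finset.abs_sum_le_sum_abs _ _).trans (Finset.sum_le_sum fun j _ => ?_)
    rw [abs_mul, abs_of_nonneg (h0 j)]
    exact mul_le_mul_of_nonneg_right (hle j) (abs_nonneg _)
  have hb' : ∀ i, |x i| ≤ ∑ j, (r : ℤ) * |u j i| := fun i => by exact_mod_cast hb i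
  exact ⟨fun i => (abs_le.1 (hb' i)).1, fun i => (abs_le.1 (hb' i)).2⟩

lemma EhrL_bij {n d : ℕ} (D : ℕ) (hD : 0 < D) (u : Fin (n+1) → Fin d → ℤ) (r : ℕ) :
    Set.BijOn (fun (φ : Fin (n+1) → ℝ) i => ⌊∑ j, φ j * (u j i : ℝ)⌋) (EhrL D u r)
      (EhrX D u r) := by
  have hD' : (D : ℝ) ≠ 0 := by positivity
  refine ⟨?_, ?_, ?_⟩
  · rintro φ ⟨h0, h1, ⟨x, hx⟩, h3⟩
    refine ⟨φ, h0, fun i => ?_, h3⟩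
    simp only [hx, Int.floor_intCast]
  · rintro φ ⟨h0, h1, ⟨x, hx⟩, h3⟩ ψ ⟨g0, g1, ⟨y, hy⟩, g3⟩ h
    have hxy : x = y := by
      ext i
      have := congrFun h i
      simpa only [hx, hy, Int.floor_intCast] using this
    subst hxy
    refine h1.unique g1 h0 g0 (fun i => by rw [hx, hy]) ?_
    exact mul_left_cancel₀ hD' (h3.trans g3.symm)
  · rintro x ⟨l, h0, h1, h2⟩
    obtain ⟨φ, g0, g1, g2, g3⟩ := Ehr_exists_good u l h0
    refine ⟨φ, ⟨g0, g1, ⟨x, fun i => by rw [g2, h1]⟩, by rw [g3, h2]⟩, ?_⟩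
    ext i
    simp only [g2, h1, Int.floor_intCast]

def EhrB {n d : ℕ} (D : ℕ) (u : Fin (n+1) → Fin d → ℤ) : Set (ℕ × (Fin (n+1) → ℝ)) :=
  {b | b.2 ∈ EhrL D u b.1 ∧ b.2 0 < 1 ∧ ∀ j, b.2 j ≤ 1}

lemma EhrL_finite {n d : ℕ} (D : ℕ) (hD : 0 < D) (u : Fin (n+1) → Fin d → ℤ) (r : ℕ) :
    (EhrL D u r).Finite :=
  Set.Finite.of_finite_image (by rw [(EhrL_bij D hD u r).image_eq]; exact EhrX_finite D hD u r)
    (EhrL_bij D hD u r).injOn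

lemma EhrB_finite {n d : ℕ} (D : ℕ) (hD : 0 < D) (u : Fin (n+1) → Fin d → ℤ) :
    (EhrB D u).Finite := by
  refine ((Set.finite_Iic (D * (n+1))).biUnion
    (t := fun l => ({l} : Set ℕ) ×ˢ EhrL D u l)
    (fun l _ => (Set.finite_singleton l).prod (EhrL_finite D hD u l))).subset ?_
  rintro ⟨l, φ⟩ ⟨h1, h2, h3⟩
  simp only [Set.mem_iUnion]
  refine ⟨l, ?_, rfl, h1⟩
  have hs : ∑ j, φ j ≤ (n + 1 : ℝ) := by
    refine (Finset.sum_le_sum fun j _ => h3 j).trans ?_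
    simp
  have : (l : ℝ) ≤ D * (n + 1) := by
    rw [← h1.2.2.2]
    exact mul_le_mul_of_nonneg_left hs (by positivity)
  show l ≤ D * (n+1)
  exact_mod_cast this

open Classical in
noncomputable def EhrT {n : ℕ} (φ : Fin (n+1) → ℝ) : Finset (Fin (n+1)) :=
  Finset.univ.filter fun j => j = 0 ∨ φ j ≠ 0

lemma EhrB_lev {n d : ℕ} (D : ℕ) (hD : 0 < D) (u : Fin (n+1) → Fin d → ℤ)
    (b : ℕ × (Fin (n+1) → ℝ)) (hb : b ∈ EhrB D u) :
    ∃ p, (EhrT b.2).card = p + 1 ∧ b.1 < D * (p + 1) := by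
  have h0 : (0 : Fin (n+1)) ∈ EhrT b.2 := by simp [EhrT]
  have hpos : 0 < (EhrT b.2).card := Finset.card_pos.2 ⟨0, h0⟩
  refine ⟨(EhrT b.2).card - 1, by omega, ?_⟩
  rw [Nat.sub_add_cancel hpos]
  obtain ⟨h1, h2, h3⟩ := hb
  have hsum : ∑ j, b.2 j = ∑ j ∈ EhrT b.2, b.2 j := by
    symm
    refine Finset.sum_subset (Finset.subset_univ _) fun j _ hj => ?_
    simp [EhrT] at hj
    exact hj.2
  have hlt : ∑ j ∈ EhrT b.2, b.2 j < ∑ j ∈ EhrT b.2, (1 : ℝ) :=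
    Finset.sum_lt_sum (fun j _ => h3 j) ⟨0, h0, h2⟩
  have hDp : (0 : ℝ) < D := by exact_mod_cast hD
  have : (b.1 : ℝ) < D * (EhrT b.2).card := by
    rw [← h1.2.2.2, hsum]
    refine mul_lt_mul_of_pos_left ?_ hDp
    simpa using hlt
  exact_mod_cast this

lemma Ehr_key_mem {n d : ℕ} (D : ℕ) (u : Fin (n+1) → Fin d → ℤ) (r : ℕ)
    (b : ℕ × (Fin (n+1) → ℝ)) (hb : b ∈ EhrB D u) (k : Fin (n+1) → ℕ)
    (hk : k ∈ EhrN D (EhrT b.2) b.1 r) : (fun j => b.2 j + k j) ∈ EhrL D u r := by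
  obtain ⟨⟨h0, h1, ⟨x, hx⟩, h3⟩, -, -⟩ := hb
  obtain ⟨k0, k1⟩ := hk
  refine ⟨fun j => add_nonneg (h0 j) (Nat.cast_nonneg _), h1.congr fun j hj hφ => ?_,
    ⟨fun i => x i + ∑ j, (k j : ℤ) * u j i, fun i => ?_⟩, ?_⟩
  · have : k j = 0 := k0 j (by simp [EhrT, hj, hφ])
    simp [hφ, this]
  · push_cast
    simp only [add_mul, Finset.sum_add_distrib, hx]
  · rw [Finset.sum_add_distrib, mul_add, h3, ← k1]
    push_cast
    ring

lemma Ehr_key_inj {n d : ℕ} (D : ℕ) (u : Fin (n+1) → Fin d → ℤ) (r : ℕ)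
    (b c : ℕ × (Fin (n+1) → ℝ)) (hb : b ∈ EhrB D u) (hc : c ∈ EhrB D u) (k m : Fin (n+1) → ℕ)
    (hk : k ∈ EhrN D (EhrT b.2) b.1 r) (hm : m ∈ EhrN D (EhrT c.2) c.1 r)
    (h : (fun j => b.2 j + k j) = (fun j => c.2 j + m j)) : b = c ∧ k = m := by
  have hkm : k = m := by
    ext j
    have hj := congrFun h j
    have hb0 := hb.1.1 j
    have hc0 := hc.1.1 j
    have hb1 := hb.2.2 j
    have hc1 := hc.2.2 j
    -- if both remainders are nonextreme the difference is an integer in (-1, 1)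
    have main : |b.2 j - c.2 j| < 1 → k j = m j := by
      intro hlt
      have h1 : |((k j : ℤ) - (m j : ℤ) : ℤ)| < 1 := by
        have : |((k j : ℝ) - (m j : ℝ))| < 1 := by
          rw [show (k j : ℝ) - m j = -(b.2 j - c.2 j) by linarith, abs_neg]
          exact hlt
        exact_mod_cast this
      have := Int.abs_lt_one_iff.1 h1
      omega
    by_cases hj0 : j = 0
    · subst hj0
      apply main
      have := hb.2.1
      have := hc.2.1
      rw [abs_lt]; constructor <;> linarith
    · rcases hb0.eq_or_lt with e | e
      · have hk0 : k j = 0 := hk.1 j (by simp [EhrT, hj0, e.symm])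
        rw [← e, hk0] at hj
        have hm0 : (m j : ℝ) = 0 := by
          have : (0 : ℝ) ≤ m j := Nat.cast_nonneg _
          push_cast at hj
          linarith
        rw [hk0]
        exact_mod_cast hm0.symm
      · rcases hc0.eq_or_lt with f | f
        · have hm0 : m j = 0 := hm.1 j (by simp [EhrT, hj0, f.symm])
          rw [← f, hm0] at hj
          have : (0 : ℝ) ≤ k j := Nat.cast_nonneg _
          push_cast at hj
          linarith
        · apply main
          rw [abs_lt]; constructor <;> linarith
  subst hkm
  refine ⟨?_, rfl⟩
  have h2 : b.2 = c.2 := by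
    ext j
    have := congrFun h j
    simpa using this
  have h1 : b.1 = c.1 := by
    have e1 := hb.1.2.2.2
    have e2 := hc.1.2.2.2
    rw [h2] at e1
    exact_mod_cast e1.symm.trans e2
  exact Prod.ext h1 h2

lemma Ehr_key_surj {n d : ℕ} (D : ℕ) (u : Fin (n+1) → Fin d → ℤ) (r : ℕ)
    (l : Fin (n+1) → ℝ) (hl : l ∈ EhrL D u r) : ∃ b ∈ EhrB D u, ∃ k ∈ EhrN D (EhrT b.2) b.1 r,
      (fun j => b.2 j + k j) = l := by
  obtain ⟨h0, h1, ⟨x, hx⟩, h3⟩ := hl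
  let k : Fin (n+1) → ℕ := fun j => if j = 0 then ⌊l j⌋₊ else ⌈l j⌉₊ - 1
  let φ : Fin (n+1) → ℝ := fun j => l j - k j
  have hk0 : ∀ j, j ≠ 0 → l j = 0 → k j = 0 := fun j hj e => by simp [k, hj, e]
  have hcast : ∀ j, j ≠ 0 → l j ≠ 0 → (k j : ℝ) = ⌈l j⌉₊ - 1 := fun j hj e => by
    have : 0 < ⌈l j⌉₊ := Nat.ceil_pos.2 (lt_of_le_of_ne (h0 j) (Ne.symm e))
    simp only [k, hj, if_false]
    rw [Nat.cast_sub (by omega)]; simp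
  have hφpos : ∀ j, j ≠ 0 → l j ≠ 0 → 0 < φ j ∧ φ j ≤ 1 := fun j hj e => by
    have a := Nat.ceil_lt_add_one (h0 j)
    have b := Nat.le_ceil (l j)
    simp only [φ, hcast j hj e]
    constructor <;> linarith
  have hφ0 : 0 ≤ φ 0 ∧ φ 0 < 1 := by
    have a := Nat.floor_le (h0 0)
    have b := Nat.lt_floor_add_one (l 0)
    simp only [φ, k, if_true]
    constructor <;> linarith
  have hφz : ∀ j, j ≠ 0 → l j = 0 → φ j = 0 := fun j hj e => by simp [φ, hk0 j hj e, e]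
  have hφnn : ∀ j, 0 ≤ φ j := fun j => by
    by_cases hj : j = 0
    · rw [hj]; exact hφ0.1
    · by_cases e : l j = 0
      · exact (hφz j hj e).ge
      · exact (hφpos j hj e).1.le
  have hφle : ∀ j, φ j ≤ 1 := fun j => by
    by_cases hj : j = 0
    · rw [hj]; exact hφ0.2.le
    · by_cases e : l j = 0
      · rw [hφz j hj e]; exact zero_le_one
      · exact (hφpos j hj e).2
  have hsum : (D : ℝ) * ∑ j, φ j + D * ∑ j, (k j : ℝ) = r := by
    rw [← h3, ← mul_add, ← Finset.sum_add_distrib]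
    simp [φ]
  have hle : D * ∑ j, k j ≤ r := by
    have : (D : ℝ) * ∑ j, (k j : ℝ) ≤ r := by
      have : 0 ≤ (D : ℝ) * ∑ j, φ j :=
        mul_nonneg (Nat.cast_nonneg _) (Finset.sum_nonneg fun j _ => hφnn j)
      linarith
    exact_mod_cast this
  refine ⟨(r - D * ∑ j, k j, φ), ⟨⟨hφnn, h1.congr hφz, ⟨fun i => x i - ∑ j, (k j : ℤ) * u j i,
    fun i => ?_⟩, ?_⟩, hφ0.2, hφle⟩, k, ⟨fun j hj => ?_, ?_⟩, ?_⟩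
  · push_cast
    simp only [φ, sub_mul, Finset.sum_sub_distrib, hx]
  · simp only
    rw [Nat.cast_sub hle]
    push_cast
    linarith
  · simp only [EhrT, Finset.mem_filter, Finset.mem_univ, true_and, not_or, not_not] at hj
    apply hk0 j hj.1
    by_contra e
    exact (hφpos j hj.1 e).1.ne' hj.2
  · simp only
    omega
  · ext j; simp [φ]

lemma EhrX_qp {n d : ℕ} (D : ℕ) (hD : 0 < D) (u : Fin (n+1) → Fin d → ℤ) :
    EhrQP D (fun r => ((EhrX D u r).ncard : ℚ)) := by
  have hfin := EhrB_finite D hD u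
  have hcard : ∀ r, (EhrX D u r).ncard =
      ∑ b ∈ hfin.toFinset, (EhrN D (EhrT b.2) b.1 r).ncard := by
    intro r
    rw [← (EhrL_bij D hD u r).image_eq, Set.ncard_image_of_injOn (EhrL_bij D hD u r).injOn]
    let F : (Σ b : EhrB D u, EhrN D (EhrT b.1.2) b.1.1 r) → EhrL D u r :=
      fun z => ⟨fun j => z.1.1.2 j + z.2.1 j, Ehr_key_mem D u r z.1.1 z.1.2 z.2.1 z.2.2⟩
    have hF : Function.Bijective F := by
      constructor
      · rintro ⟨⟨b, hb⟩, ⟨k, hk⟩⟩ ⟨⟨c, hc⟩, ⟨m, hm⟩⟩ h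
        obtain ⟨rfl, rfl⟩ := Ehr_key_inj D u r b c hb hc k m hk hm (congrArg Subtype.val h)
        rfl
      · rintro ⟨l, hl⟩
        obtain ⟨b, hb, k, hk, h⟩ := Ehr_key_surj D u r l hl
        exact ⟨⟨⟨b, hb⟩, ⟨k, hk⟩⟩, Subtype.ext h⟩
    have : Fintype (EhrB D u) := hfin.fintype
    have : ∀ b : EhrB D u, Finite (EhrN D (EhrT b.1.2) b.1.1 r) :=
      fun b => (EhrN_finite D hD _ _ _).to_subtype
    rw [← Nat.card_coe_set_eq, ← Nat.card_congr (Equiv.ofBijective F hF), Nat.card_sigma]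
    simp only [Nat.card_coe_set_eq]
    symm
    refine Finset.sum_subtype _ (fun b => by simp) _
  have : EhrQP D (fun r => ∑ b ∈ hfin.toFinset, ((EhrN D (EhrT b.2) b.1 r).ncard : ℚ)) := by
    refine EhrQP.sum _ _ fun b hb => ?_
    obtain ⟨p, hp, hl⟩ := EhrB_lev D hD u b (by simpa using hb)
    exact EhrN_qp D hD _ p _ hp hl
  convert! this using 2 with r
  rw [hcard]
  push_cast
  rfl

lemma EhrP_qp {d : ℕ} (D : ℕ) (hD : 0 < D) (P : Set (Fin d → ℝ)) (hne : P.Nonempty)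
    (hP : IsLatticePolytope d ((D : ℝ) • P)) :
    EhrQP D (fun r =>
      (Set.ncard {x : Fin d → ℤ | (fun i => (x i : ℝ)) ∈ (r : ℝ) • P} : ℚ)) := by
  have hD' : (D : ℝ) ≠ 0 := by positivity
  have hDp : (0 : ℝ) < D := by positivity
  obtain ⟨V, hV⟩ := hP
  have hVne : V.Nonempty := by
    rw [Finset.nonempty_iff_ne_empty]
    rintro rfl
    simp at hV
    exact hne.ne_empty hV
  obtain ⟨n, hn⟩ : ∃ n, V.card = n + 1 := ⟨V.card - 1, by have := hVne.card_pos; omega⟩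
  let e : V ≃ Fin (n+1) := V.equivFinOfCardEq hn
  let u : Fin (n+1) → Fin d → ℤ := fun j => (e.symm j).1
  have hmem : ∀ y : Fin d → ℝ, y ∈ (D : ℝ) • P ↔ ∃ w : Fin (n+1) → ℝ, (∀ j, 0 ≤ w j) ∧
      ∑ j, w j = 1 ∧ ∀ i, ∑ j, w j * (u j i : ℝ) = y i := by
    intro y
    have himg : ((fun v : Fin d → ℤ => fun i => ((v i : ℝ))) '' ↑V) =
        Set.range (fun j => fun i => (u j i : ℝ)) := by
      ext z
      constructor
      · rintro ⟨v, hv, rfl⟩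
        exact ⟨e ⟨v, hv⟩, by simp [u]⟩
      · rintro ⟨j, rfl⟩
        exact ⟨u j, (e.symm j).2, rfl⟩
    rw [hV, himg]
    rw [convexHull_range_eq_exists_affineCombination]
    constructor
    · rintro ⟨s, w, h0, h1, h2⟩
      classical
      rw [Finset.affineCombination_eq_linear_combination _ _ _ h1] at h2
      refine ⟨fun j => if j ∈ s then w j else 0, fun j => ?_, ?_, fun i => ?_⟩
      · dsimp only
        split_ifs with h
        · exact h0 j h
        · exact le_rfl
      · simpa using h1
      · rw [← h2]
        simp [Finset.sum_apply]
    · rintro ⟨w, h0, h1, h2⟩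
      refine ⟨Finset.univ, w, fun j _ => h0 j, h1, ?_⟩
      rw [Finset.affineCombination_eq_linear_combination _ _ _ h1]
      ext i
      rw [← h2]
      simp [Finset.sum_apply]
  have hset : ∀ r : ℕ, {x : Fin d → ℤ | (fun i => (x i : ℝ)) ∈ (r : ℝ) • P} = EhrX D u r := by
    intro r
    ext x
    constructor
    · rintro ⟨y, hy, hyx⟩
      obtain ⟨w, w0, w1, w2⟩ := (hmem ((D : ℝ) • y)).1 (Set.smul_mem_smul_set hy)
      refine ⟨fun j => (r / D : ℝ) * w j, fun j => mul_nonneg (by positivity) (w0 j),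
        fun i => ?_, ?_⟩
      · simp only [mul_assoc, ← Finset.mul_sum, w2 i]
        have := congrFun hyx i
        simp at this ⊢
        rw [← this]
        field_simp
      · rw [← Finset.mul_sum, w1]
        field_simp
    · rintro ⟨φ, h0, h1, h2⟩
      rcases Nat.eq_zero_or_pos r with rfl | hr
      · obtain ⟨y, hy⟩ := hne
        refine ⟨y, hy, ?_⟩
        have hs : ∑ j, φ j = 0 := by simpa [hD'] using h2
        have hz := (Finset.sum_eq_zero_iff_of_nonneg (fun j _ => h0 j)).1 hs
        ext i
        rw [← h1 i]
        simp [hz]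
      · have hr' : (0 : ℝ) < r := by exact_mod_cast hr
        have : (fun i => (D / r : ℝ) * (x i : ℝ)) ∈ (D : ℝ) • P := by
          rw [hmem]
          refine ⟨fun j => (D / r : ℝ) * φ j, fun j => mul_nonneg (by positivity) (h0 j),
            ?_, fun i => ?_⟩
          · rw [← Finset.mul_sum]
            field_simp
            exact h2
          · simp only [mul_assoc, ← Finset.mul_sum, h1 i]
        obtain ⟨y, hy, hyx⟩ := this
        refine ⟨y, hy, ?_⟩
        ext i
        have := congrFun hyx i
        simp at this ⊢
        field_simp at this
        linarith
  simp only [hset]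
  exact EhrX_qp D hD u

lemma Ehr_exists_lattice {d : ℕ} (V : Finset (Fin d → ℚ)) :
    ∃ k : ℕ, 1 ≤ k ∧ IsLatticePolytope d ((k : ℝ) •
      convexHull ℝ ((fun v : Fin d → ℚ => fun i => ((v i : ℝ))) '' (V : Set (Fin d → ℚ)))) := by
  classical
  let k : ℕ := ∏ v ∈ V, ∏ i, (v i).den
  have hk : 0 < k := Finset.prod_pos fun v _ => Finset.prod_pos fun i _ => (v i).den_pos
  have hint : ∀ v ∈ V, ∀ i, (((k : ℚ) * v i).num : ℚ) = k * v i := by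
    intro v hv i
    have hdvd : (v i).den ∣ k :=
      (Finset.dvd_prod_of_mem (fun i => (v i).den) (Finset.mem_univ i)).trans
        (Finset.dvd_prod_of_mem (fun v : Fin d → ℚ => ∏ i, (v i).den) hv)
    obtain ⟨c, hc⟩ := hdvd
    have : (k : ℚ) * v i = ((c * (v i).num : ℤ) : ℚ) := by
      rw [hc]
      push_cast
      rw [mul_comm ((v i).den : ℚ), mul_assoc, Rat.den_mul_eq_num]
    rw [this, Rat.num_intCast]
  refine ⟨k, hk, V.image (fun v i => ((k : ℚ) * v i).num), ?_⟩
  rw [← convexHull_smul]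
  congr 1
  rw [Finset.coe_image, ← Set.image_smul, Set.image_image, Set.image_image]
  refine Set.image_congr fun v hv => ?_
  ext i
  have := hint v hv i
  have h2 : ((((k : ℚ) * v i).num : ℚ) : ℝ) = ((k * v i : ℚ) : ℝ) := by rw [this]
  simp only [Pi.smul_apply, smul_eq_mul]
  push_cast at h2
  rw [← h2]

/-- Ehrhart's theorem, part 2: for a rational polytope `P ⊆ ℝ^d` of dimension `d`,
the counting function `L(P, r) = Card(rP ∩ ℤ^d)` agrees with a quasi-polynomial whose
period divides `𝒟(P) = min{n ≥ 1 : nP is a lattice polytope}`; in particular, if `P`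
is itself a lattice polytope then `L(P, r)` is a polynomial in `r` with rational
coefficients. -/
theorem ehrhart_quasipolynomial_period
    (d : ℕ) (hd : 0 < d) (P : Set (Fin d → ℝ))
    (hP : ∃ V : Finset (Fin d → ℚ),
      P = convexHull ℝ ((fun v : Fin d → ℚ => fun i => ((v i : ℝ))) '' ↑V))
    (hdim : affineSpan ℝ P = ⊤) :
    (∃ (q : ℕ) (hq : 0 < q),
      q ∣ sInf {k : ℕ | 1 ≤ k ∧ IsLatticePolytope d ((k : ℝ) • P)} ∧
      ∃ g : Fin q → Polynomial ℚ,
        ∀ r : ℕ,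
          (Set.ncard {x : Fin d → ℤ | (fun i => (x i : ℝ)) ∈ (r : ℝ) • P} : ℚ)
            = (g ⟨r % q, Nat.mod_lt r hq⟩).eval (r : ℚ)) ∧
    (IsLatticePolytope d P →
      ∃ p : Polynomial ℚ,
        ∀ r : ℕ,
          (Set.ncard {x : Fin d → ℤ | (fun i => (x i : ℝ)) ∈ (r : ℝ) • P} : ℚ)
            = p.eval (r : ℚ)) := by
  have hne : P.Nonempty := by
    rw [Set.nonempty_iff_ne_empty]
    rintro rfl
    simp at hdim
  constructor
  · have hmem : sInf {k : ℕ | 1 ≤ k ∧ IsLatticePolytope d ((k : ℝ) • P)} ∈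
        {k : ℕ | 1 ≤ k ∧ IsLatticePolytope d ((k : ℝ) • P)} := by
      apply Nat.sInf_mem
      obtain ⟨V, rfl⟩ := hP
      exact Ehr_exists_lattice V
    obtain ⟨h1, h2⟩ := hmem
    refine ⟨_, h1, dvd_rfl, ?_⟩
    choose g hg using EhrP_qp _ h1 P hne h2
    exact ⟨fun i => g i.1, fun r => hg _ r rfl⟩
  · intro hL
    obtain ⟨p, hp⟩ := EhrP_qp 1 one_pos P hne (by simpa using hL) 0
    exact ⟨p, fun r => hp r (Nat.mod_one r)⟩
end
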